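/- Let ε,b > 0 and let c:(−ε,b) → ℝ^{n+2} be smooth with ⟨c(t),c(t)⟩ = 0, c(t) ≠ 0 and ⟨c′(t),c′(t)⟩ = 1 for all t. Let λ ∈ ℝ with 2λ > 1 and fix p ∈ (0,b). Let T:(0,b) → End(ℝ^{n+2}) be differentiable with T(p) = id and T′(t) = (λ/t²)·(T(t)∘(c(t)∧c′(t))), and let ĉ:(0,b) → ℝ^{n+2} be differentiable, nowhere zero, with ⟨ĉ(t),ĉ(t)⟩ = 0 for all t and ĉ′(t) = −(λ/t²)·(⟨c(t),ĉ(t)⟩c′(t) − ⟨c′(t),ĉ(t)⟩c(t)). Suppose ĉ(p) IS a projective accumulation point at 0 of the curve t ↦ T(t)(c(t)). Then: (i) every projective accumulation point of ĉ at 0 lies in the 3-dimensional subspace span{c(0), c′(0), c″(0)} (hence on the curvature circle of the curve at 0, being null); (ii) c(0) is a projective accumulation point of ĉ at 0, and so is any null vector c̄₀ ∈ span{c(0), c′(0), c″(0)} with ⟨c̄₀,c(0)⟩ = −1 and ⟨c̄₀,c′(0)⟩ = 0 (such c̄₀ exists); in particular ĉ does not converge projectively as t → 0⁺. -/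

import Mathlib

open scoped BigOperators Topology
open Filter Set MeasureTheory

noncomputable section

abbrev E (n : ℕ) := EuclideanSpace ℝ (Fin (n + 2))

/-- Minkowski inner product of signature (n+1,1). -/
def mink {n : ℕ} (x y : E n) : ℝ :=
  ∑ i, (if i = Fin.last (n + 1) then (-1 : ℝ) else 1) * x i * y i

variable {n : ℕ}

lemma mink_comm (x y : E n) : mink x y = mink y x :=
  Finset.sum_congr rfl fun i _ => by ring

lemma mink_add_right (v x y : E n) : mink v (x + y) = mink v x + mink v y := by
  simp [mink, mul_add, Finset.sum_add_distrib]

lemma mink_smul_right (v : E n) (c : ℝ) (x : E n) : mink v (c • x) = c * mink v x := by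
  unfold mink
  rw [Finset.mul_sum]
  refine Finset.sum_congr rfl fun i _ => ?_
  simp only [PiLp.smul_apply, smul_eq_mul]
  ring

lemma mink_add_left (x y v : E n) : mink (x + y) v = mink x v + mink y v := by
  rw [mink_comm, mink_add_right, mink_comm v x, mink_comm v y]

lemma mink_smul_left (c : ℝ) (x v : E n) : mink (c • x) v = c * mink x v := by
  rw [mink_comm, mink_smul_right, mink_comm v x]

/-- `v ∧ w` as an endomorphism: `x ↦ ⟨v,x⟩ w − ⟨w,x⟩ v`. -/
def wedge {n : ℕ} (v w : E n) : E n →L[ℝ] E n :=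
  LinearMap.toContinuousLinearMap
    { toFun := fun x => mink v x • w - mink w x • v
      map_add' := by
        intro x y
        simp only [mink_add_right, add_smul]
        abel
      map_smul' := by
        intro c x
        simp only [mink_smul_right, RingHom.id_apply, mul_smul, smul_sub] }

/-- rank one endomorphism `vw* : x ↦ ⟨x,w⟩ v`. -/
def rankOne {n : ℕ} (v w : E n) : E n →L[ℝ] E n :=
  LinearMap.toContinuousLinearMap
    { toFun := fun x => mink x w • v
      map_add' := by
        intro x y
        simp only [mink_add_left, add_smul]
      map_smul' := by
        intro c x
        simp only [mink_smul_left, RingHom.id_apply, mul_smul] }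

/-- A nonzero `x` is a projective accumulation point at `0` of a curve
`γ : (0,b) → ℝ^{n+2} ∖ {0}` if some sequence `tᵢ → 0⁺` in `(0,b)` and reals `rᵢ`
satisfy `rᵢ • γ (tᵢ) → x`. -/
def projAccum {n : ℕ} (b : ℝ) (γ : ℝ → E n) (x : E n) : Prop :=
  ∃ (ts : ℕ → ℝ) (rs : ℕ → ℝ), (∀ i, ts i ∈ Set.Ioo (0:ℝ) b) ∧
    Tendsto ts atTop (𝓝 0) ∧ Tendsto (fun i => rs i • γ (ts i)) atTop (𝓝 x)

/-!
Both the Calapso transformation `T` and the functional `⟨ĉ, ·⟩` solve the linear equation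
`L' = (lam / t ^ 2) L ∘ (c ∧ c')`. The rescaled values `L c / t`, `L c'` and `t L c''` of a solution
satisfy a Fuchsian system whose residue matrix has the eigenvalues `0` and `± i ω`, where
`2 lam = ω ^ 2 + 1`. Rotating the oscillating part back by the phase `ω log t` removes the pole, so
by Grönwall's inequality all components are bounded, and the rotated ones converge at `0`.

That the initial point of `ĉ` lies on the limit circle of `T c` forces the normal component of `ĉ`
to vanish in the limit, hence to be `O(t ^ 2)`, and the eigenvalue `0` part of `ĉ` to have a limit
`α ≠ 0`. Nullity of `ĉ` then fixes the limiting amplitude `ρ` of the oscillation by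
`ρ ^ 2 ω ^ 2 = α ^ 2 (ω ^ 2 + 1)`. Since `|ρ| > |α| / ω`, the component `⟨ĉ, c'⟩` keeps changing
sign as `t → 0⁺`. Along its zeros `ĉ` approaches the null direction of the osculating space that is
orthogonal to `c'(0)` and different from `c(0)`, while along the times where `t ⟨ĉ, c''⟩` stays away
from `0` it approaches `c(0)`.
-/

open Asymptotics

section Asymptotics

theorem tendsto_pow_succ_nhdsGT_zero (k : ℕ) :
    Tendsto (fun t : ℝ ↦ t ^ (k + 1)) (𝓝[>] 0) (𝓝 0) :=
  tendsto_nhdsWithin_of_tendsto_nhds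
    (by simpa only [zero_pow k.succ_ne_zero] using (continuous_pow (k + 1)).tendsto (0 : ℝ))

variable {F : Type*} [NormedAddCommGroup F] [NormedSpace ℝ F] {x x' : ℝ → F} {k : ℕ}

theorem isBigO_smul_of_isBigO_one {α G : Type*} [NormedAddCommGroup G] {l : Filter α}
    {φ : α → ℝ} {f : α → F} {g : α → G} (hφ : φ =O[l] (fun _ ↦ (1 : ℝ)))
    (hf : f =O[l] g) : (fun t ↦ φ t • f t) =O[l] g :=
  isBigO_norm_right.1 (by simpa only [one_smul] using hφ.smul hf.norm_right)

theorem isBigO_inv_one {α : Type*} {l : Filter α} {g : α → ℝ} {δ : ℝ} (hδ : 0 < δ)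
    (hg : ∀ᶠ t in l, δ ≤ |g t|) : (fun t ↦ (g t)⁻¹) =O[l] (fun _ ↦ (1 : ℝ)) := by
  have h : (fun _ ↦ (1 : ℝ)) =O[l] g :=
    (isBigO_const_left_iff_pos_le_norm one_ne_zero).2 ⟨δ, hδ, hg⟩
  simpa only [inv_one] using h.inv_rev (.of_forall fun _ h ↦ absurd h one_ne_zero)

theorem isBigO_cos_one {α : Type*} (l : Filter α) (θ : α → ℝ) :
    (fun t ↦ Real.cos (θ t)) =O[l] (fun _ ↦ (1 : ℝ)) :=
  isBigO_of_le l fun t ↦ by simpa using Real.abs_cos_le_one (θ t)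

theorem isBigO_sin_one {α : Type*} (l : Filter α) (θ : α → ℝ) :
    (fun t ↦ Real.sin (θ t)) =O[l] (fun _ ↦ (1 : ℝ)) :=
  isBigO_of_le l fun t ↦ by simpa using Real.abs_sin_le_one (θ t)

theorem isBigO_one_of_deriv_isBigO_self (hx : ∀ᶠ t in 𝓝[>] 0, HasDerivAt x (x' t) t)
    (hO : x' =O[𝓝[>] 0] x) : x =O[𝓝[>] 0] (fun _ ↦ (1 : ℝ)) := by
  obtain ⟨K, hK, hbound⟩ := hO.exists_nonneg
  obtain ⟨δ, hδ, h⟩ := (nhdsGT_basis (0 : ℝ)).eventually_iff.1 (hx.and hbound.bound)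
  have hmem : ∀ s ∈ Ico (0 : ℝ) (δ / 2), δ / 2 - s ∈ Ioo 0 δ := fun s hs ↦
    ⟨by linarith [hs.2], by linarith [hs.1]⟩
  have hderiv : ∀ s ∈ Ico (0 : ℝ) (δ / 2),
      HasDerivAt (fun s ↦ x (δ / 2 - s)) (-x' (δ / 2 - s)) s := fun s hs ↦
    (h (hmem s hs)).1.comp_const_sub
  refine IsBigO.of_bound (‖x (δ / 2)‖ * Real.exp (K * (δ / 2))) ?_
  filter_upwards [Ioo_mem_nhdsGT (half_pos hδ)] with t ht
  have hsub : Icc 0 (δ / 2 - t) ⊆ Ico 0 (δ / 2) := fun s hs ↦ ⟨hs.1, by linarith [hs.2, ht.1]⟩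
  have hgronwall := norm_le_gronwallBound_of_norm_deriv_right_le
    (δ := ‖x (δ / 2)‖) (K := K) (ε := 0)
    (fun s hs ↦ (hderiv s (hsub hs)).continuousAt.continuousWithinAt)
    (fun s hs ↦ (hderiv s (hsub (Ico_subset_Icc_self hs))).hasDerivWithinAt)
    (by simp)
    (fun s hs ↦ by simpa using (h (hmem s (hsub (Ico_subset_Icc_self hs)))).2)
    (δ / 2 - t) (right_mem_Icc.2 (by linarith [ht.2]))
  rw [gronwallBound_ε0, sub_sub_cancel, sub_zero] at hgronwall
  rw [norm_one, mul_one]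
  refine hgronwall.trans ?_
  gcongr
  linarith [ht.1]

theorem exists_sub_isBigO_pow_succ [CompleteSpace F]
    (hx : ∀ᶠ t in 𝓝[>] 0, HasDerivAt x (x' t) t) (hO : x' =O[𝓝[>] 0] (· ^ k)) :
    ∃ L, (fun t ↦ x t - L) =O[𝓝[>] 0] (· ^ (k + 1)) := by
  obtain ⟨C, hC, hbound⟩ := hO.exists_nonneg
  obtain ⟨δ, hδ, h⟩ := (nhdsGT_basis (0 : ℝ)).eventually_iff.1 (hx.and hbound.bound)
  have hlip : ∀ t ∈ Ioo 0 δ, ∀ s ∈ Ioc 0 t, ∀ s' ∈ Ioc 0 t,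
      ‖x s' - x s‖ ≤ C * t ^ k * ‖s' - s‖ := by
    intro t ht s hs s' hs'
    have hsub : Ioc 0 t ⊆ Ioo 0 δ := fun y hy ↦ ⟨hy.1, hy.2.trans_lt ht.2⟩
    refine (convex_Ioc 0 t).norm_image_sub_le_of_norm_hasDerivWithin_le
      (fun y hy ↦ (h (hsub hy)).1.hasDerivWithinAt) (fun y hy ↦ (h (hsub hy)).2.trans ?_) hs hs'
    rw [norm_pow, Real.norm_of_nonneg hy.1.le]
    gcongr
    exacts [hy.1.le, hy.2]
  have hcauchy : Cauchy (map x (𝓝[>] 0)) := by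
    have hδ2 : δ / 2 ∈ Ioo 0 δ := ⟨half_pos hδ, half_lt_self hδ⟩
    have hK : 0 ≤ C * (δ / 2) ^ k := mul_nonneg hC (pow_nonneg hδ2.1.le k)
    have : LipschitzOnWith ⟨_, hK⟩ x (Ioc 0 (δ / 2)) := LipschitzOnWith.of_dist_le_mul
      fun s' hs' s hs ↦ by
        rw [dist_eq_norm, dist_eq_norm]
        exact hlip _ hδ2 s hs s' hs'
    exact (cauchy_nhds.mono' inferInstance nhdsWithin_le_nhds).map_of_le this.uniformContinuousOn
      (le_principal_iff.2 (Ioc_mem_nhdsGT hδ2.1))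
  obtain ⟨L, hL⟩ := cauchy_map_iff_exists_tendsto.1 hcauchy
  refine ⟨L, IsBigO.of_bound C ?_⟩
  filter_upwards [Ioo_mem_nhdsGT hδ] with t ht
  have hid : Tendsto (fun s : ℝ ↦ s) (𝓝[>] 0) (𝓝 0) :=
    tendsto_nhdsWithin_of_tendsto_nhds tendsto_id
  have hlim := le_of_tendsto_of_tendsto (hL.const_sub (x t)).norm
    ((hid.const_sub t).norm.const_mul (C * t ^ k))
    (by filter_upwards [Ioc_mem_nhdsGT ht.1] with s hs
        exact hlip t ht s hs t (right_mem_Ioc.2 ht.1))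
  rwa [sub_zero, mul_assoc, ← Real.norm_of_nonneg (pow_nonneg ht.1.le k), ← norm_mul,
    ← pow_succ] at hlim

theorem exists_tendsto_of_deriv_isBigO_one [CompleteSpace F]
    (hx : ∀ᶠ t in 𝓝[>] 0, HasDerivAt x (x' t) t) (hO : x' =O[𝓝[>] 0] (fun _ ↦ (1 : ℝ))) :
    ∃ L, Tendsto x (𝓝[>] 0) (𝓝 L) := by
  obtain ⟨L, hL⟩ := exists_sub_isBigO_pow_succ (k := 0) hx (by simpa only [pow_zero] using hO)
  refine ⟨L, tendsto_sub_nhds_zero_iff.1 (hL.trans_tendsto ?_)⟩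
  exact tendsto_pow_succ_nhdsGT_zero 0

theorem sub_isBigO_pow_succ_of_tendsto [CompleteSpace F] {L : F}
    (hx : ∀ᶠ t in 𝓝[>] 0, HasDerivAt x (x' t) t) (hO : x' =O[𝓝[>] 0] (· ^ k))
    (hL : Tendsto x (𝓝[>] 0) (𝓝 L)) : (fun t ↦ x t - L) =O[𝓝[>] 0] (· ^ (k + 1)) := by
  obtain ⟨L', hL'⟩ := exists_sub_isBigO_pow_succ hx hO
  rwa [tendsto_nhds_unique hL (tendsto_sub_nhds_zero_iff.1
    (hL'.trans_tendsto (tendsto_pow_succ_nhdsGT_zero k)))]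

end Asymptotics

section FuchsianSystem

variable {F G : Type*} [NormedAddCommGroup F] [NormedSpace ℝ F] [NormedAddCommGroup G]
  [NormedSpace ℝ G] {lam ω : ℝ} {u v w r : ℝ → F}

/-- The inhomogeneous linear system with a regular singularity at `0⁺` that governs the transforms
of a curve with second order pole, for the spectral parameter `lam`. -/
structure IsFuchsianSystem (lam : ℝ) (u v w r : ℝ → F) : Prop where
  deriv_u : ∀ᶠ t in 𝓝[>] 0, HasDerivAt u (t⁻¹ • (v t - u t)) t
  deriv_v : ∀ᶠ t in 𝓝[>] 0, HasDerivAt v (t⁻¹ • (w t - lam • u t)) t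
  deriv_w : ∀ᶠ t in 𝓝[>] 0, HasDerivAt w (t⁻¹ • (w t - lam • v t) + r t) t

/-- The component of a solution along the kernel of the residue matrix: it is conserved by the
homogeneous system. -/
def meanPart (lam : ℝ) (u v w : ℝ → F) (t : ℝ) : F := lam • u t - v t + w t

/-- First oscillating component of a solution, for `lam = (ω ^ 2 + 1) / 2`: the homogeneous system
rotates the pair `(oscFst, oscSnd)` with frequency `ω` in the variable `log t`. -/
def oscFst (ω : ℝ) (u v w : ℝ → F) (t : ℝ) : F :=
  ω • v t - ω⁻¹ • meanPart ((ω ^ 2 + 1) / 2) u v w t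

/-- Second oscillating component of a solution, for `lam = (ω ^ 2 + 1) / 2`. -/
def oscSnd (ω : ℝ) (u w : ℝ → F) (t : ℝ) : F := w t - ((ω ^ 2 + 1) / 2) • u t

/-- First component of the pair `(oscFst, oscSnd)` rotated back by the phase `ω log t`, so that the
homogeneous system conserves it. -/
def amplitudeFst (ω : ℝ) (u v w : ℝ → F) (t : ℝ) : F :=
  Real.cos (ω * Real.log t) • oscFst ω u v w t - Real.sin (ω * Real.log t) • oscSnd ω u w t

/-- Second component of the pair `(oscFst, oscSnd)` rotated back by the phase `ω log t`. -/
def amplitudeSnd (ω : ℝ) (u v w : ℝ → F) (t : ℝ) : F :=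
  Real.sin (ω * Real.log t) • oscFst ω u v w t + Real.cos (ω * Real.log t) • oscSnd ω u w t

theorem oscFst_eq_amplitude (ω : ℝ) (u v w : ℝ → F) (t : ℝ) :
    oscFst ω u v w t = Real.cos (ω * Real.log t) • amplitudeFst ω u v w t +
      Real.sin (ω * Real.log t) • amplitudeSnd ω u v w t := by
  unfold amplitudeFst amplitudeSnd
  match_scalars
  · linear_combination -Real.cos_sq_add_sin_sq (ω * Real.log t)
  · ring

theorem oscSnd_eq_amplitude (ω : ℝ) (u v w : ℝ → F) (t : ℝ) :
    oscSnd ω u w t = Real.cos (ω * Real.log t) • amplitudeSnd ω u v w t -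
      Real.sin (ω * Real.log t) • amplitudeFst ω u v w t := by
  unfold amplitudeFst amplitudeSnd
  match_scalars
  · linear_combination -Real.cos_sq_add_sin_sq (ω * Real.log t)
  · ring

theorem v_eq_meanPart_add_oscFst (hω : ω ≠ 0) (u v w : ℝ → F) (t : ℝ) :
    v t = (ω ^ 2)⁻¹ • meanPart ((ω ^ 2 + 1) / 2) u v w t + ω⁻¹ • oscFst ω u v w t := by
  unfold oscFst
  match_scalars <;> field_simp
  ring

theorem w_eq_meanPart_add_oscSnd (ω : ℝ) (u v w : ℝ → F) (t : ℝ) :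
    w t = (2⁻¹ : ℝ) • (meanPart ((ω ^ 2 + 1) / 2) u v w t + v t + oscSnd ω u w t) := by
  unfold meanPart oscSnd
  module

theorem u_eq_meanPart_sub_oscSnd (ω : ℝ) (u v w : ℝ → F) (t : ℝ) :
    u t = (ω ^ 2 + 1)⁻¹ • (meanPart ((ω ^ 2 + 1) / 2) u v w t + v t - oscSnd ω u w t) := by
  have : ω ^ 2 + 1 ≠ 0 := by positivity
  unfold meanPart oscSnd
  match_scalars <;> field_simp <;> ring

theorem isBigO_amplitude (hω : ω ≠ 0) (u v w : ℝ → F) (l : Filter ℝ) :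
    (fun t ↦ (u t, v t, w t)) =O[l] fun t ↦
      (meanPart ((ω ^ 2 + 1) / 2) u v w t, amplitudeFst ω u v w t, amplitudeSnd ω u v w t) := by
  set y := fun t ↦
    (meanPart ((ω ^ 2 + 1) / 2) u v w t, amplitudeFst ω u v w t, amplitudeSnd ω u v w t)
  have hcos := isBigO_cos_one l fun t ↦ ω * Real.log t
  have hsin := isBigO_sin_one l fun t ↦ ω * Real.log t
  have ha : meanPart ((ω ^ 2 + 1) / 2) u v w =O[l] y := isBigO_fst_prod
  have hp : amplitudeFst ω u v w =O[l] y :=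
    (isBigO_fst_prod (f' := amplitudeFst ω u v w)).trans isBigO_snd_prod
  have hq : amplitudeSnd ω u v w =O[l] y :=
    (isBigO_snd_prod (g' := amplitudeSnd ω u v w)).trans isBigO_snd_prod
  have hP : oscFst ω u v w =O[l] y :=
    ((isBigO_smul_of_isBigO_one hcos hp).add (isBigO_smul_of_isBigO_one hsin hq)).congr_left
      fun t ↦ (oscFst_eq_amplitude ω u v w t).symm
  have hQ : oscSnd ω u w =O[l] y :=
    ((isBigO_smul_of_isBigO_one hcos hq).sub (isBigO_smul_of_isBigO_one hsin hp)).congr_left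
      fun t ↦ (oscSnd_eq_amplitude ω u v w t).symm
  have hv : v =O[l] y := ((ha.const_smul_left _).add (hP.const_smul_left _)).congr_left
    fun t ↦ (v_eq_meanPart_add_oscFst hω u v w t).symm
  have hw : w =O[l] y := (((ha.add hv).add hQ).const_smul_left _).congr_left
    fun t ↦ (w_eq_meanPart_add_oscSnd ω u v w t).symm
  have hu : u =O[l] y := (((ha.add hv).sub hQ).const_smul_left _).congr_left
    fun t ↦ (u_eq_meanPart_sub_oscSnd ω u v w t).symm
  exact hu.prod_left (hv.prod_left hw)

namespace IsFuchsianSystem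

theorem hasDerivAt_meanPart (h : IsFuchsianSystem lam u v w r) :
    ∀ᶠ t in 𝓝[>] 0, HasDerivAt (meanPart lam u v w) (r t) t := by
  filter_upwards [h.deriv_u, h.deriv_v, h.deriv_w] with t hu hv hw
  refine HasDerivAt.congr_deriv (((hu.const_smul lam).sub hv).add hw) ?_
  module

theorem hasDerivAt_oscFst (h : IsFuchsianSystem ((ω ^ 2 + 1) / 2) u v w r) :
    ∀ᶠ t in 𝓝[>] 0, HasDerivAt (oscFst ω u v w)
      ((ω * t⁻¹) • oscSnd ω u w t - ω⁻¹ • r t) t := by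
  filter_upwards [h.deriv_v, h.hasDerivAt_meanPart] with t hv ha
  refine HasDerivAt.congr_deriv ((hv.const_smul ω).sub (ha.const_smul ω⁻¹)) ?_
  rw [oscSnd, mul_smul]

theorem hasDerivAt_oscSnd (hω : ω ≠ 0) (h : IsFuchsianSystem ((ω ^ 2 + 1) / 2) u v w r) :
    ∀ᶠ t in 𝓝[>] 0, HasDerivAt (oscSnd ω u w)
      (-(ω * t⁻¹) • oscFst ω u v w t + r t) t := by
  filter_upwards [h.deriv_u, h.deriv_w] with t hu hw
  refine HasDerivAt.congr_deriv (hw.sub (hu.const_smul ((ω ^ 2 + 1) / 2))) ?_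
  unfold oscFst meanPart
  match_scalars <;> field_simp
  ring

theorem hasDerivAt_amplitudeFst (hω : ω ≠ 0) (h : IsFuchsianSystem ((ω ^ 2 + 1) / 2) u v w r) :
    ∀ᶠ t in 𝓝[>] 0, HasDerivAt (amplitudeFst ω u v w)
      (-(ω⁻¹ * Real.cos (ω * Real.log t) + Real.sin (ω * Real.log t)) • r t) t := by
  filter_upwards [h.hasDerivAt_oscFst, h.hasDerivAt_oscSnd hω, self_mem_nhdsWithin]
    with t hP hH ht
  have hθ := (Real.hasDerivAt_log (ne_of_gt ht)).const_mul ω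
  refine HasDerivAt.congr_deriv ((hθ.cos.smul hP).sub (hθ.sin.smul hH)) ?_
  module

theorem hasDerivAt_amplitudeSnd (hω : ω ≠ 0) (h : IsFuchsianSystem ((ω ^ 2 + 1) / 2) u v w r) :
    ∀ᶠ t in 𝓝[>] 0, HasDerivAt (amplitudeSnd ω u v w)
      ((Real.cos (ω * Real.log t) - ω⁻¹ * Real.sin (ω * Real.log t)) • r t) t := by
  filter_upwards [h.hasDerivAt_oscFst, h.hasDerivAt_oscSnd hω, self_mem_nhdsWithin]
    with t hP hH ht
  have hθ := (Real.hasDerivAt_log (ne_of_gt ht)).const_mul ω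
  refine HasDerivAt.congr_deriv ((hθ.sin.smul hP).add (hθ.cos.smul hH)) ?_
  module

theorem isBigO_one (hω : ω ≠ 0) (h : IsFuchsianSystem ((ω ^ 2 + 1) / 2) u v w r) {m m' : ℝ → G}
    (hm : ∀ᶠ t in 𝓝[>] 0, HasDerivAt m (m' t) t)
    (hr : r =O[𝓝[>] 0] fun t ↦ ((u t, v t, w t), m t))
    (hm' : m' =O[𝓝[>] 0] fun t ↦ ((u t, v t, w t), m t)) :
    (fun t ↦ ((u t, v t, w t), m t)) =O[𝓝[>] 0] (fun _ ↦ (1 : ℝ)) := by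
  have hsol : (fun t ↦ ((u t, v t, w t), m t)) =O[𝓝[>] 0] fun t ↦
      ((meanPart ((ω ^ 2 + 1) / 2) u v w t, amplitudeFst ω u v w t, amplitudeSnd ω u v w t), m t) :=
    ((isBigO_amplitude hω u v w _).trans isBigO_fst_prod).prod_left isBigO_snd_prod
  have hcos := isBigO_cos_one (𝓝[>] 0) fun t ↦ ω * Real.log t
  have hsin := isBigO_sin_one (𝓝[>] 0) fun t ↦ ω * Real.log t
  refine hsol.trans (isBigO_one_of_deriv_isBigO_self
    (x' := fun t ↦ ((r t,
      -(ω⁻¹ * Real.cos (ω * Real.log t) + Real.sin (ω * Real.log t)) • r t,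
      (Real.cos (ω * Real.log t) - ω⁻¹ * Real.sin (ω * Real.log t)) • r t), m' t)) ?_ ?_)
  · filter_upwards [h.hasDerivAt_meanPart, h.hasDerivAt_amplitudeFst hω,
      h.hasDerivAt_amplitudeSnd hω, hm] with t ha hp hq hm
    exact (ha.prodMk (hp.prodMk hq)).prodMk hm
  · refine IsBigO.trans ?_ hsol
    exact (hr.prod_left
      ((isBigO_smul_of_isBigO_one ((hcos.const_mul_left _).add hsin).neg_left hr).prod_left
        (isBigO_smul_of_isBigO_one (hcos.sub (hsin.const_mul_left _)) hr))).prod_left hm'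

end IsFuchsianSystem

end FuchsianSystem

section Oscillation

variable {ω α ρ φ : ℝ} {u v w r : ℝ → ℝ}

theorem exists_polar_of_sq_add_sq_eq_sq {x y : ℝ} (hρ : ρ ≠ 0) (h : x ^ 2 + y ^ 2 = ρ ^ 2) :
    ∃ φ, x = ρ * Real.cos φ ∧ y = ρ * Real.sin φ := by
  let z : ℂ := ⟨x / ρ, y / ρ⟩
  have hz : ‖z‖ = 1 := by
    rw [Complex.norm_def, Complex.normSq_mk, Real.sqrt_eq_one, ← sq, ← sq, div_pow, div_pow,
      ← add_div, h, div_self (pow_ne_zero 2 hρ)]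
  refine ⟨z.arg, ?_, ?_⟩
  · rw [← one_mul (Real.cos _), ← hz, Complex.norm_mul_cos_arg, mul_div_cancel₀ _ hρ]
  · rw [← one_mul (Real.sin _), ← hz, Complex.norm_mul_sin_arg, mul_div_cancel₀ _ hρ]

theorem amplitude_sq_add_sq (hω : ω ≠ 0) (u v w : ℝ → ℝ) (t : ℝ) :
    amplitudeFst ω u v w t ^ 2 + amplitudeSnd ω u v w t ^ 2 =
      (ω ^ 2 + 1) * (v t ^ 2 - 2 * u t * w t) +
        (ω ^ 2 + 1) * (meanPart ((ω ^ 2 + 1) / 2) u v w t / ω) ^ 2 := by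
  have hrot : amplitudeFst ω u v w t ^ 2 + amplitudeSnd ω u v w t ^ 2 =
      oscFst ω u v w t ^ 2 + oscSnd ω u w t ^ 2 := by
    simp only [amplitudeFst, amplitudeSnd, smul_eq_mul]
    linear_combination (oscFst ω u v w t ^ 2 + oscSnd ω u w t ^ 2) *
      Real.cos_sq_add_sin_sq (ω * Real.log t)
  rw [hrot]
  simp only [oscFst, oscSnd, meanPart, smul_eq_mul]
  field_simp
  ring

theorem tendsto_of_tendsto_amplitude {p₀ q₀ : ℝ}
    (hp : Tendsto (amplitudeFst ω u v w) (𝓝[>] 0) (𝓝 p₀))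
    (hq : Tendsto (amplitudeSnd ω u v w) (𝓝[>] 0) (𝓝 q₀)) (hp₀ : p₀ = ρ * Real.cos φ)
    (hq₀ : q₀ = ρ * Real.sin φ) :
    Tendsto (fun t ↦ oscFst ω u v w t - ρ * Real.cos (ω * Real.log t - φ)) (𝓝[>] 0) (𝓝 0) ∧
      Tendsto (fun t ↦ oscSnd ω u w t + ρ * Real.sin (ω * Real.log t - φ)) (𝓝[>] 0) (𝓝 0) := by
  have hp' : (fun t ↦ amplitudeFst ω u v w t - p₀) =o[𝓝[>] 0] (fun _ ↦ (1 : ℝ)) :=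
    (isLittleO_one_iff ℝ).2 (tendsto_sub_nhds_zero_iff.2 hp)
  have hq' : (fun t ↦ amplitudeSnd ω u v w t - q₀) =o[𝓝[>] 0] (fun _ ↦ (1 : ℝ)) :=
    (isLittleO_one_iff ℝ).2 (tendsto_sub_nhds_zero_iff.2 hq)
  have hcos := isBigO_cos_one (𝓝[>] 0) fun t ↦ ω * Real.log t
  have hsin := isBigO_sin_one (𝓝[>] 0) fun t ↦ ω * Real.log t
  constructor
  · have := (hcos.mul_isLittleO hp').add (hsin.mul_isLittleO hq')
    rw [mul_one, isLittleO_one_iff] at this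
    refine this.congr fun t ↦ ?_
    rw [oscFst_eq_amplitude, Real.cos_sub, hp₀, hq₀]
    simp only [smul_eq_mul]
    ring
  · have := (hcos.mul_isLittleO hq').sub (hsin.mul_isLittleO hp')
    rw [mul_one, isLittleO_one_iff] at this
    refine this.congr fun t ↦ ?_
    rw [oscSnd_eq_amplitude ω u v w, Real.sin_sub, hp₀, hq₀]
    simp only [smul_eq_mul]
    ring

theorem IsFuchsianSystem.exists_phase (hω : 0 < ω)
    (h : IsFuchsianSystem ((ω ^ 2 + 1) / 2) u v w r) (hr : r =O[𝓝[>] 0] (fun _ ↦ (1 : ℝ)))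
    (hα : α ≠ 0) (ha : Tendsto (meanPart ((ω ^ 2 + 1) / 2) u v w) (𝓝[>] 0) (𝓝 α))
    (hnull : Tendsto (fun t ↦ v t ^ 2 - 2 * u t * w t) (𝓝[>] 0) (𝓝 0)) :
    ∃ ρ φ, α ^ 2 < ω * (α * ρ) ∧
      Tendsto (fun t ↦ oscFst ω u v w t - ρ * Real.cos (ω * Real.log t - φ)) (𝓝[>] 0) (𝓝 0) ∧
      Tendsto (fun t ↦ oscSnd ω u w t + ρ * Real.sin (ω * Real.log t - φ)) (𝓝[>] 0) (𝓝 0) := by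
  have hcos := isBigO_cos_one (𝓝[>] 0) fun t ↦ ω * Real.log t
  have hsin := isBigO_sin_one (𝓝[>] 0) fun t ↦ ω * Real.log t
  obtain ⟨p₀, hp⟩ := exists_tendsto_of_deriv_isBigO_one (h.hasDerivAt_amplitudeFst hω.ne')
    (isBigO_smul_of_isBigO_one ((hcos.const_mul_left _).add hsin).neg_left hr)
  obtain ⟨q₀, hq⟩ := exists_tendsto_of_deriv_isBigO_one (h.hasDerivAt_amplitudeSnd hω.ne')
    (isBigO_smul_of_isBigO_one (hcos.sub (hsin.const_mul_left _)) hr)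
  set s := √(ω ^ 2 + 1)
  have hs : s ^ 2 = ω ^ 2 + 1 := Real.sq_sqrt (by positivity)
  have hs1 : 1 < s := Real.lt_sqrt_of_sq_lt (by nlinarith)
  have hradius : p₀ ^ 2 + q₀ ^ 2 = (α * s / ω) ^ 2 := by
    have := ((hnull.const_mul (ω ^ 2 + 1)).add
      (((ha.div_const ω).pow 2).const_mul (ω ^ 2 + 1))).congr
        fun t ↦ (amplitude_sq_add_sq hω.ne' u v w t).symm
    rw [tendsto_nhds_unique ((hp.pow 2).add (hq.pow 2)) this, ← hs]
    ring
  obtain ⟨φ, hp₀, hq₀⟩ := exists_polar_of_sq_add_sq_eq_sq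
    (div_ne_zero (mul_ne_zero hα (zero_lt_one.trans hs1).ne') hω.ne') hradius
  refine ⟨_, φ, ?_, tendsto_of_tendsto_amplitude hp hq hp₀ hq₀⟩
  calc α ^ 2 < α ^ 2 * s := lt_mul_of_one_lt_right (by positivity) hs1
    _ = ω * (α * (α * s / ω)) := by field_simp

/-- The times, indexed by `k` and tending to `0`, at which the phase `ω log t` equals
`φ - 2 π k`. -/
def phaseTime (ω φ : ℝ) (k : ℕ) : ℝ := Real.exp ((φ - k * (2 * Real.pi)) / ω)

theorem mul_log_phaseTime (hω : ω ≠ 0) (φ : ℝ) (k : ℕ) :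
    ω * Real.log (phaseTime ω φ k) = φ - k * (2 * Real.pi) := by
  rw [phaseTime, Real.log_exp, mul_div_cancel₀ _ hω]

theorem tendsto_phaseTime (hω : 0 < ω) (φ : ℝ) : Tendsto (phaseTime ω φ) atTop (𝓝[>] 0) := by
  refine tendsto_nhdsWithin_iff.2 ⟨Real.tendsto_exp_atBot.comp ?_,
    Eventually.of_forall fun k ↦ Real.exp_pos _⟩
  refine Tendsto.atBot_div_const hω (tendsto_atBot_add_const_left _ φ ?_)
  exact tendsto_neg_atTop_atBot.comp (tendsto_natCast_atTop_atTop.atTop_mul_const (by positivity))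

theorem tendsto_v_phaseTime (hω : 0 < ω)
    (ha : Tendsto (meanPart ((ω ^ 2 + 1) / 2) u v w) (𝓝[>] 0) (𝓝 α))
    (hP : Tendsto (fun t ↦ oscFst ω u v w t - ρ * Real.cos (ω * Real.log t - φ)) (𝓝[>] 0) (𝓝 0))
    (ψ : ℝ) : Tendsto (fun k ↦ v (phaseTime ω (φ + ψ) k)) atTop
      (𝓝 ((ω ^ 2)⁻¹ * α + ω⁻¹ * (ρ * Real.cos ψ))) := by
  have ht := tendsto_phaseTime hω (φ + ψ)
  have hPk := ((hP.comp ht).add_const (ρ * Real.cos ψ)).const_mul ω⁻¹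
  rw [zero_add] at hPk
  refine (((ha.comp ht).const_mul (ω ^ 2)⁻¹).add hPk).congr fun k ↦ ?_
  have hphase : ω * Real.log (phaseTime ω (φ + ψ) k) - φ = ψ - k * (2 * Real.pi) := by
    rw [mul_log_phaseTime hω.ne']
    ring
  simp only [Function.comp_apply, hphase, Real.cos_sub_nat_mul_two_pi, sub_add_cancel]
  exact (v_eq_meanPart_add_oscFst hω.ne' u v w _).symm

theorem tendsto_oscSnd_phaseTime (hω : 0 < ω)
    (hH : Tendsto (fun t ↦ oscSnd ω u w t + ρ * Real.sin (ω * Real.log t - φ)) (𝓝[>] 0) (𝓝 0)) :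
    Tendsto (fun k ↦ oscSnd ω u w (phaseTime ω φ k)) atTop (𝓝 0) := by
  refine (hH.comp (tendsto_phaseTime hω φ)).congr fun k ↦ ?_
  have hphase : ω * Real.log (phaseTime ω φ k) - φ = 0 - k * (2 * Real.pi) := by
    rw [mul_log_phaseTime hω.ne']
    ring
  simp only [Function.comp_apply, hphase, Real.sin_sub_nat_mul_two_pi, Real.sin_zero, mul_zero,
    add_zero]

theorem exists_frequently_le_abs_w (hω : 0 < ω) (hρ : α ^ 2 < ω * (α * ρ))
    (ha : Tendsto (meanPart ((ω ^ 2 + 1) / 2) u v w) (𝓝[>] 0) (𝓝 α))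
    (hP : Tendsto (fun t ↦ oscFst ω u v w t - ρ * Real.cos (ω * Real.log t - φ)) (𝓝[>] 0) (𝓝 0))
    (hH : Tendsto (fun t ↦ oscSnd ω u w t + ρ * Real.sin (ω * Real.log t - φ)) (𝓝[>] 0) (𝓝 0)) :
    ∃ δ > 0, ∃ᶠ t in 𝓝[>] 0, δ ≤ |w t| := by
  have ht := tendsto_phaseTime hω φ
  have hv := tendsto_v_phaseTime hω ha hP 0
  rw [add_zero, Real.cos_zero, mul_one] at hv
  set W := 2⁻¹ * (α + ((ω ^ 2)⁻¹ * α + ω⁻¹ * ρ) + 0)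
  have hw : Tendsto (fun k ↦ w (phaseTime ω φ k)) atTop (𝓝 W) :=
    ((((ha.comp ht).add hv).add (tendsto_oscSnd_phaseTime hω hH)).const_mul 2⁻¹).congr
      fun k ↦ (w_eq_meanPart_add_oscSnd ω u v w _).symm
  have hαρ : 0 < α * ρ := pos_of_mul_pos_right ((sq_nonneg α).trans_lt hρ) hω.le
  have hαW : 0 < α * W := by
    have : α * W = 2⁻¹ * (α ^ 2 + (ω ^ 2)⁻¹ * α ^ 2 + ω⁻¹ * (α * ρ)) := by ring
    rw [this]
    positivity
  have hW : 0 < |W| := abs_pos.2 (right_ne_zero_of_mul hαW.ne')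
  exact ⟨|W| / 2, half_pos hW, ht.frequently
    ((hw.abs.eventually_const_le (half_lt_self hW)).frequently)⟩

theorem mul_sin_phase_nonneg (hω : 0 < ω) (hαρ : 0 ≤ α * ρ) {t : ℝ} {k : ℕ}
    (ht : t ∈ Icc (phaseTime ω φ k) (phaseTime ω (φ + Real.pi) k)) :
    0 ≤ α * (ρ * Real.sin (ω * Real.log t - φ)) := by
  have hpos : 0 < phaseTime ω φ k := Real.exp_pos _
  have hlow := mul_le_mul_of_nonneg_left (Real.log_le_log hpos ht.1) hω.le
  have hupp := mul_le_mul_of_nonneg_left (Real.log_le_log (hpos.trans_le ht.1) ht.2) hω.le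
  rw [mul_log_phaseTime hω.ne'] at hlow hupp
  rw [← mul_assoc, ← Real.sin_add_nat_mul_two_pi _ k]
  exact mul_nonneg hαρ (Real.sin_nonneg_of_nonneg_of_le_pi (by linarith) (by linarith))

theorem IsFuchsianSystem.eventually_exists_v_eq_zero (hω : 0 < ω)
    (h : IsFuchsianSystem ((ω ^ 2 + 1) / 2) u v w r) (hρ : α ^ 2 < ω * (α * ρ))
    (ha : Tendsto (meanPart ((ω ^ 2 + 1) / 2) u v w) (𝓝[>] 0) (𝓝 α))
    (hP : Tendsto (fun t ↦ oscFst ω u v w t - ρ * Real.cos (ω * Real.log t - φ)) (𝓝[>] 0)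
      (𝓝 0)) :
    ∀ᶠ k in atTop, ∃ t ∈ Icc (phaseTime ω φ k) (phaseTime ω (φ + Real.pi) k), v t = 0 := by
  obtain ⟨δ, hδ, hv⟩ := (nhdsGT_basis (0 : ℝ)).eventually_iff.1 h.deriv_v
  have hstart := tendsto_v_phaseTime hω ha hP 0
  have hend := (tendsto_v_phaseTime hω ha hP Real.pi).const_mul α
  rw [add_zero] at hstart
  have hstart_pos : 0 < α * ((ω ^ 2)⁻¹ * α + ω⁻¹ * (ρ * Real.cos 0)) := by
    have hαρ : 0 < α * ρ := pos_of_mul_pos_right ((sq_nonneg α).trans_lt hρ) hω.le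
    have : 0 < (ω ^ 2)⁻¹ * α ^ 2 + ω⁻¹ * (α * ρ) := by positivity
    rw [Real.cos_zero]
    linarith
  have hend_neg : α * ((ω ^ 2)⁻¹ * α + ω⁻¹ * (ρ * Real.cos Real.pi)) < 0 := by
    have : α * ((ω ^ 2)⁻¹ * α + ω⁻¹ * (ρ * Real.cos Real.pi)) =
        (ω ^ 2)⁻¹ * (α ^ 2 - ω * (α * ρ)) := by
      rw [Real.cos_pi]
      field_simp
      ring
    rw [this]
    exact mul_neg_of_pos_of_neg (by positivity) (sub_neg.2 hρ)
  filter_upwards [(hstart.const_mul α).eventually_const_lt hstart_pos,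
    hend.eventually_lt_const hend_neg,
    (tendsto_phaseTime hω (φ + Real.pi)).eventually (Ioo_mem_nhdsGT hδ)] with k hk₀ hkπ hkδ
  have hsub : Icc (phaseTime ω φ k) (phaseTime ω (φ + Real.pi) k) ⊆ Ioo 0 δ := fun t ht ↦
    ⟨(Real.exp_pos _).trans_le ht.1, ht.2.trans_lt hkδ.2⟩
  have hle : phaseTime ω φ k ≤ phaseTime ω (φ + Real.pi) k := by
    unfold phaseTime
    gcongr
    linarith [Real.pi_pos]
  have hcont : ContinuousOn (fun t ↦ α * v t)
      (Icc (phaseTime ω φ k) (phaseTime ω (φ + Real.pi) k)) := fun t ht ↦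
    ((hv (hsub ht)).continuousAt.const_mul α).continuousWithinAt
  obtain ⟨t, ht, hvt⟩ := intermediate_value_Icc' hle hcont ⟨hkπ.le, hk₀.le⟩
  exact ⟨t, ht, (mul_eq_zero.1 hvt).resolve_left (left_ne_zero_of_mul hend_neg.ne)⟩

theorem IsFuchsianSystem.exists_frequently_v_eq_zero (hω : 0 < ω)
    (h : IsFuchsianSystem ((ω ^ 2 + 1) / 2) u v w r) (hα : α ≠ 0) (hρ : α ^ 2 < ω * (α * ρ))
    (ha : Tendsto (meanPart ((ω ^ 2 + 1) / 2) u v w) (𝓝[>] 0) (𝓝 α))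
    (hP : Tendsto (fun t ↦ oscFst ω u v w t - ρ * Real.cos (ω * Real.log t - φ)) (𝓝[>] 0) (𝓝 0))
    (hH : Tendsto (fun t ↦ oscSnd ω u w t + ρ * Real.sin (ω * Real.log t - φ)) (𝓝[>] 0)
      (𝓝 0)) :
    ∃ δ > 0, ∃ᶠ t in 𝓝[>] 0, v t = 0 ∧ δ ≤ |u t| := by
  have hα2 : 0 < α ^ 2 := by positivity
  have hαρ : 0 < α * ρ := pos_of_mul_pos_right (hα2.trans hρ) hω.le
  have hmean : ∀ᶠ t in 𝓝[>] 0, 3 / 4 * α ^ 2 < α * meanPart ((ω ^ 2 + 1) / 2) u v w t :=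
    (ha.const_mul α).eventually_const_lt (by linarith [sq α])
  have hsin : ∀ᶠ t in 𝓝[>] 0,
      α * (oscSnd ω u w t + ρ * Real.sin (ω * Real.log t - φ)) < 1 / 4 * α ^ 2 :=
    (hH.const_mul α).eventually_lt_const (by linarith)
  refine ⟨|(ω ^ 2 + 1)⁻¹ * (α / 2)|, by positivity, fun hnot ↦ ?_⟩
  obtain ⟨δ, hδ, hsmall⟩ := (nhdsGT_basis (0 : ℝ)).eventually_iff.1 (hnot.and (hmean.and hsin))
  obtain ⟨k, ⟨t, ht, hvt⟩, hkδ⟩ := ((h.eventually_exists_v_eq_zero hω hρ ha hP).and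
    ((tendsto_phaseTime hω (φ + Real.pi)).eventually (Ioo_mem_nhdsGT hδ))).exists
  obtain ⟨hnot, hmean, hsin⟩ := hsmall ⟨(Real.exp_pos _).trans_le ht.1, ht.2.trans_lt hkδ.2⟩
  have hphase := mul_sin_phase_nonneg hω hαρ.le ht
  refine hnot ⟨hvt, ?_⟩
  rw [u_eq_meanPart_sub_oscSnd ω u v w, hvt, add_zero, smul_eq_mul, abs_mul, abs_mul]
  refine mul_le_mul_of_nonneg_left ?_ (abs_nonneg _)
  refine le_of_mul_le_mul_left ?_ (abs_pos.2 hα)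
  rw [← abs_mul, ← abs_mul, abs_of_nonneg (by nlinarith : 0 ≤ α * (α / 2))]
  exact le_trans (by linarith) (le_abs_self _)

end Oscillation

section ScalarProduct

variable {V W : Type*} [NormedAddCommGroup V] [NormedSpace ℝ V] [NormedAddCommGroup W]
  [NormedSpace ℝ W] {B : V →L[ℝ] V →L[ℝ] ℝ}

/-- A scalar product of arbitrary signature: a symmetric, nondegenerate bilinear form. -/
structure IsScalarProduct (B : V →L[ℝ] V →L[ℝ] ℝ) : Prop where
  symm : ∀ x y, B x y = B y x
  injective : Function.Injective B

/-- The musical isomorphism `x ↦ B x` of a scalar product onto the dual space. -/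
def IsScalarProduct.musical [FiniteDimensional ℝ V] (hB : IsScalarProduct B) :
    V ≃L[ℝ] (V →L[ℝ] ℝ) :=
  (LinearEquiv.ofInjectiveOfFinrankEq (B : V →ₗ[ℝ] V →L[ℝ] ℝ) hB.injective
    (Subspace.dual_finrank_eq.symm.trans
      LinearMap.toContinuousLinearMap.finrank_eq)).toContinuousLinearEquiv

theorem IsScalarProduct.musical_apply [FiniteDimensional ℝ V] (hB : IsScalarProduct B) (x : V) :
    hB.musical x = B x := rfl

theorem IsScalarProduct.apply_musical_symm [FiniteDimensional ℝ V] (hB : IsScalarProduct B)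
    (f : V →L[ℝ] ℝ) : B (hB.musical.symm f) = f :=
  hB.musical.apply_symm_apply f

theorem hasDerivAt_bilin {x y : ℝ → V} {x' y' : V} {t : ℝ} (hx : HasDerivAt x x' t)
    (hy : HasDerivAt y y' t) :
    HasDerivAt (fun s ↦ B (x s) (y s)) (B (x t) y' + B x' (y t)) t :=
  B.hasDerivAt_of_bilinear (fun _ ↦ hx) (fun _ ↦ hy)

theorem tendsto_bilin {α : Type*} {l : Filter α} {x y : α → V} {x₀ y₀ : V}
    (hx : Tendsto x l (𝓝 x₀)) (hy : Tendsto y l (𝓝 y₀)) :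
    Tendsto (fun i ↦ B (x i) (y i)) l (𝓝 (B x₀ y₀)) :=
  (B.continuous₂.tendsto (x₀, y₀)).comp (hx.prodMk_nhds hy)

theorem hasDerivAt_smulRight {x : ℝ → V} {y : ℝ → W} {x' : V} {y' : W} {t : ℝ}
    (hx : HasDerivAt x x' t) (hy : HasDerivAt y y' t) :
    HasDerivAt (fun s ↦ (B (x s)).smulRight (y s))
      ((B (x t)).smulRight y' + (B x').smulRight (y t)) t :=
  (ContinuousLinearMap.smulRightL ℝ V W).hasDerivAt_of_bilinear
    (fun _ ↦ B.hasFDerivAt.comp_hasDerivAt t hx) (fun _ ↦ hy)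

/-- The skew endomorphism `v ∧ w : x ↦ ⟨v, x⟩ w - ⟨w, x⟩ v`. -/
def skewWedge (B : V →L[ℝ] V →L[ℝ] ℝ) (v w : V) : V →L[ℝ] V :=
  (B v).smulRight w - (B w).smulRight v

theorem skewWedge_apply (v w x : V) : skewWedge B v w x = B v x • w - B w x • v := rfl

theorem IsScalarProduct.skewWedge_skew (hB : IsScalarProduct B) (v w x y : V) :
    B (skewWedge B v w x) y = -B x (skewWedge B v w y) := by
  simp only [skewWedge_apply, map_sub, map_smul, sub_apply,
    smul_apply, smul_eq_mul, hB.symm x]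
  ring

end ScalarProduct

section FlatFrame

variable {V : Type*} [NormedAddCommGroup V] [NormedSpace ℝ V] {B : V →L[ℝ] V →L[ℝ] ℝ} {c d e : V}

/-- The Gram relations satisfied by a flat light-cone lift `c` and its first two derivatives
`d` and `e`. -/
structure IsFlatFrame (B : V →L[ℝ] V →L[ℝ] ℝ) (c d e : V) : Prop where
  cc : B c c = 0
  cd : B c d = 0
  ce : B c e = -1
  dd : B d d = 1
  de : B d e = 0

/-- The null vector of the osculating space `span {c, d, e}` that is orthogonal to `d` and has
inner product `-1` with `c`. -/
def oscNull (B : V →L[ℝ] V →L[ℝ] ℝ) (c e : V) : V := e + (B e e / 2) • c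

/-- The orthogonal projection onto the orthogonal complement of the osculating space
`span {c, d, e}`. -/
def normalProj (B : V →L[ℝ] V →L[ℝ] ℝ) (c d e : V) : V →L[ℝ] V :=
  .id ℝ V + (B (oscNull B c e)).smulRight c - (B d).smulRight d + (B c).smulRight (oscNull B c e)

theorem normalProj_apply (x : V) :
    normalProj B c d e x = x + B (oscNull B c e) x • c - B d x • d + B c x • oscNull B c e := rfl

theorem bilin_oscNull (c e x : V) : B (oscNull B c e) x = B e x + B e e / 2 * B c x := by
  rw [oscNull, map_add, map_smul, add_apply, smul_apply, smul_eq_mul]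

theorem eq_normalProj_sub (c d e x : V) : x = normalProj B c d e x -
    (B e x + B e e / 2 * B c x) • c + B d x • d - B c x • oscNull B c e := by
  rw [normalProj_apply, bilin_oscNull]
  module

theorem oscNull_mem_span : oscNull B c e ∈ Submodule.span ℝ {c, d, e} :=
  Submodule.mem_span_triple.2 ⟨B e e / 2, 0, 1, by simp only [oscNull, zero_smul, one_smul]; abel⟩

theorem mem_span_of_normalProj_eq_zero {x : V} (hx : normalProj B c d e x = 0) :
    x ∈ Submodule.span ℝ {c, d, e} := by
  have hc : c ∈ Submodule.span ℝ {c, d, e} := Submodule.subset_span (by simp)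
  have hd : d ∈ Submodule.span ℝ {c, d, e} := Submodule.subset_span (by simp)
  have hsum : x = -(B (oscNull B c e) x • c) + B d x • d - B c x • oscNull B c e := by
    rw [normalProj_apply] at hx
    linear_combination (norm := module) hx
  rw [hsum]
  exact sub_mem (add_mem (neg_mem (Submodule.smul_mem _ _ hc)) (Submodule.smul_mem _ _ hd))
    (Submodule.smul_mem _ _ oscNull_mem_span)

theorem IsScalarProduct.bilin_normalProj_left (hB : IsScalarProduct B) (x y : V) :
    B (normalProj B c d e x) y = B x (normalProj B c d e y) := by
  simp only [normalProj_apply, map_add, map_sub, map_smul, add_apply,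
    sub_apply, smul_apply, smul_eq_mul, hB.symm x]
  ring

namespace IsFlatFrame

theorem ne_zero (h : IsFlatFrame B c d e) : c ≠ 0 := by
  rintro rfl
  simpa using h.ce

theorem bilin_c_oscNull (h : IsFlatFrame B c d e) : B c (oscNull B c e) = -1 := by
  simp [oscNull, h.cc, h.ce]

variable (hB : IsScalarProduct B)
include hB

theorem bilin_oscNull_d (h : IsFlatFrame B c d e) : B (oscNull B c e) d = 0 := by
  simp [oscNull, h.cd, hB.symm e d, h.de]

theorem bilin_oscNull_self (h : IsFlatFrame B c d e) : B (oscNull B c e) (oscNull B c e) = 0 := by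
  simp only [oscNull, map_add, map_smul, add_apply, smul_apply, smul_eq_mul, hB.symm e c, h.cc,
    h.ce]
  ring

theorem normalProj_c (h : IsFlatFrame B c d e) : normalProj B c d e c = 0 := by
  rw [normalProj_apply, hB.symm _ c, h.bilin_c_oscNull, h.cc, hB.symm d c, h.cd]
  module

theorem normalProj_d (h : IsFlatFrame B c d e) : normalProj B c d e d = 0 := by
  rw [normalProj_apply, h.bilin_oscNull_d hB, h.dd, h.cd]
  module

theorem bilin_c_normalProj (h : IsFlatFrame B c d e) (x : V) : B c (normalProj B c d e x) = 0 := by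
  rw [← hB.bilin_normalProj_left, h.normalProj_c hB, map_zero, zero_apply]

theorem bilin_d_normalProj (h : IsFlatFrame B c d e) (x : V) : B d (normalProj B c d e x) = 0 := by
  rw [← hB.bilin_normalProj_left, h.normalProj_d hB, map_zero, zero_apply]

theorem bilin_normalProj_self (h : IsFlatFrame B c d e) (x : V) :
    B (normalProj B c d e x) (normalProj B c d e x) =
      B x x + 2 * (B (oscNull B c e) x * B c x) - B d x ^ 2 := by
  rw [normalProj_apply]
  simp only [map_add, map_sub, map_smul, add_apply,
    sub_apply, smul_apply, smul_eq_mul, hB.symm x,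
    hB.symm d (oscNull B c e), hB.symm (oscNull B c e) c, hB.symm d c, h.cc, h.cd, h.dd,
    h.bilin_c_oscNull, h.bilin_oscNull_d hB, h.bilin_oscNull_self hB]
  ring

theorem eq_oscNull_add (h : IsFlatFrame B c d e) {x : V} (hxx : B x x = 0) (hcx : B c x = -1)
    (hdx : B d x = 0) : x = oscNull B c e + normalProj B c d e x +
      (B (normalProj B c d e x) (normalProj B c d e x) / 2) • c := by
  rw [h.bilin_normalProj_self hB, hxx, hcx, hdx, normalProj_apply, hcx, hdx]
  module

theorem eq_oscNull (h : IsFlatFrame B c d e) {x : V} (hx : x ∈ Submodule.span ℝ {c, d, e})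
    (hxx : B x x = 0) (hxc : B x c = -1) (hxd : B x d = 0) : x = oscNull B c e := by
  obtain ⟨a₀, a₁, a₂, rfl⟩ := Submodule.mem_span_triple.1 hx
  simp only [map_add, map_smul, add_apply, smul_apply,
    smul_eq_mul, hB.symm d c, hB.symm e c, hB.symm e d, h.cc, h.cd, h.ce, h.dd, h.de]
    at hxx hxc hxd
  obtain rfl : a₂ = 1 := by linarith
  obtain rfl : a₁ = 0 := by linarith
  obtain rfl : a₀ = B e e / 2 := by linarith
  rw [oscNull]
  module

end IsFlatFrame

end FlatFrame

section FlatLift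

variable {V W : Type*} [NormedAddCommGroup V] [NormedSpace ℝ V] [NormedAddCommGroup W]
  [NormedSpace ℝ W] {B : V →L[ℝ] V →L[ℝ] ℝ} {s : Set ℝ} {c d e f : ℝ → V}

theorem isBigO_clm_apply {α Y : Type*} [NormedAddCommGroup Y] {l : Filter α} {A : α → V →L[ℝ] W}
    {x : α → V} {y : α → Y} (hA : A =O[l] y) (hx : x =O[l] (fun _ ↦ (1 : ℝ))) :
    (fun t ↦ A t (x t)) =O[l] y := by
  refine (isBigO_of_le l fun t ↦ ?_).trans (isBigO_norm_right.1
    (by simpa only [mul_one] using hA.norm_norm.mul hx.norm_left))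
  simpa only [norm_mul, norm_norm] using (A t).le_opNorm (x t)

theorem isBigO_smulRight {α Y : Type*} [NormedAddCommGroup Y] {l : Filter α} {x : α → V}
    {y : α → W} {z : α → Y} (hx : x =O[l] (fun _ ↦ (1 : ℝ))) (hy : y =O[l] z) :
    (fun t ↦ (B (x t)).smulRight (y t)) =O[l] z := by
  have hBx : (fun t ↦ B (x t)) =O[l] (fun _ ↦ (1 : ℝ)) := (B.isBigO_comp x l).trans hx
  refine (isBigO_of_le l fun t ↦ ?_).trans (isBigO_norm_right.1
    (by simpa only [one_mul] using hBx.norm_left.mul hy.norm_norm))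
  simp only [ContinuousLinearMap.norm_smulRight_apply, norm_mul, norm_norm, le_refl]

theorem isBigO_one_of_continuousOn {X : Type*} [NormedAddCommGroup X] (hs : s ∈ 𝓝 0)
    {x : ℝ → X} (hx : ContinuousOn x s) : x =O[𝓝[>] 0] (fun _ ↦ (1 : ℝ)) :=
  ((hx.continuousAt hs).tendsto.mono_left nhdsWithin_le_nhds).isBigO_one ℝ

/-- A flat light-cone lift `c` on the open set `s`, together with its first three derivatives
`d`, `e` and `f`. -/
structure IsFlatLift (B : V →L[ℝ] V →L[ℝ] ℝ) (s : Set ℝ) (c d e f : ℝ → V) : Prop where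
  isOpen : IsOpen s
  deriv_c : ∀ t ∈ s, HasDerivAt c (d t) t
  deriv_d : ∀ t ∈ s, HasDerivAt d (e t) t
  deriv_e : ∀ t ∈ s, HasDerivAt e (f t) t
  continuousOn_f : ContinuousOn f s
  null : ∀ t ∈ s, B (c t) (c t) = 0
  unit : ∀ t ∈ s, B (d t) (d t) = 1

theorem bilin_deriv_eq_zero {x y x' y' : ℝ → V} {a : ℝ} (hs : IsOpen s)
    (hx : ∀ t ∈ s, HasDerivAt x (x' t) t) (hy : ∀ t ∈ s, HasDerivAt y (y' t) t)
    (hxy : ∀ t ∈ s, B (x t) (y t) = a) {t : ℝ} (ht : t ∈ s) :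
    B (x t) (y' t) + B (x' t) (y t) = 0 :=
  (hasDerivAt_bilin (hx t ht) (hy t ht)).unique
    ((hasDerivAt_const t a).congr_of_eventuallyEq (eventually_of_mem (hs.mem_nhds ht) hxy))

namespace IsFlatLift

variable (hc : IsFlatLift B s c d e f)
include hc

theorem continuousOn_c : ContinuousOn c s :=
  fun t ht ↦ (hc.deriv_c t ht).continuousAt.continuousWithinAt

theorem continuousOn_d : ContinuousOn d s :=
  fun t ht ↦ (hc.deriv_d t ht).continuousAt.continuousWithinAt

theorem continuousOn_e : ContinuousOn e s :=
  fun t ht ↦ (hc.deriv_e t ht).continuousAt.continuousWithinAt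

theorem continuousOn_bilin_e : ContinuousOn (fun t ↦ B (e t) (e t)) s :=
  (B.continuous.comp_continuousOn hc.continuousOn_e).clm_apply hc.continuousOn_e

theorem continuousOn_oscNull : ContinuousOn (fun t ↦ oscNull B (c t) (e t)) s :=
  hc.continuousOn_e.add ((hc.continuousOn_bilin_e.div_const 2).smul hc.continuousOn_c)

theorem tendsto_c (hs : s ∈ 𝓝 0) : Tendsto c (𝓝[>] 0) (𝓝 (c 0)) :=
  (hc.continuousOn_c.continuousAt hs).tendsto.mono_left nhdsWithin_le_nhds

theorem tendsto_oscNull (hs : s ∈ 𝓝 0) :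
    Tendsto (fun t ↦ oscNull B (c t) (e t)) (𝓝[>] 0) (𝓝 (oscNull B (c 0) (e 0))) :=
  (hc.continuousOn_oscNull.continuousAt hs).tendsto.mono_left nhdsWithin_le_nhds

variable (hB : IsScalarProduct B)
include hB

theorem isFlatFrame {t : ℝ} (ht : t ∈ s) : IsFlatFrame B (c t) (d t) (e t) := by
  have hcd : ∀ t ∈ s, B (c t) (d t) = 0 := fun t ht ↦ by
    linarith [bilin_deriv_eq_zero hc.isOpen hc.deriv_c hc.deriv_c hc.null ht,
      hB.symm (c t) (d t)]
  exact
    { cc := hc.null t ht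
      cd := hcd t ht
      ce := by
        linarith [bilin_deriv_eq_zero hc.isOpen hc.deriv_c hc.deriv_d hcd ht, hc.unit t ht]
      dd := hc.unit t ht
      de := by
        linarith [bilin_deriv_eq_zero hc.isOpen hc.deriv_d hc.deriv_d hc.unit ht,
          hB.symm (d t) (e t)] }

theorem bilin_c_f {t : ℝ} (ht : t ∈ s) : B (c t) (f t) = 0 := by
  linarith [bilin_deriv_eq_zero hc.isOpen hc.deriv_c hc.deriv_e
    (fun t ht ↦ (hc.isFlatFrame hB ht).ce) ht, (hc.isFlatFrame hB ht).de]

theorem bilin_d_f {t : ℝ} (ht : t ∈ s) : B (d t) (f t) = -B (e t) (e t) := by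
  linarith [bilin_deriv_eq_zero hc.isOpen hc.deriv_d hc.deriv_e
    (fun t ht ↦ (hc.isFlatFrame hB ht).de) ht]

theorem normalProj_f {t : ℝ} (ht : t ∈ s) :
    normalProj B (c t) (d t) (e t) (f t) =
      f t + B (e t) (e t) • d t + B (e t) (f t) • c t := by
  rw [normalProj_apply, hc.bilin_c_f hB ht, hc.bilin_d_f hB ht, oscNull, map_add, map_smul,
    add_apply, smul_apply, hc.bilin_c_f hB ht]
  module

theorem hasDerivAt_normalProj {t : ℝ} (ht : t ∈ s) :
    HasDerivAt (fun t ↦ normalProj B (c t) (d t) (e t))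
      ((B (normalProj B (c t) (d t) (e t) (f t))).smulRight (c t) +
        (B (c t)).smulRight (normalProj B (c t) (d t) (e t) (f t))) t := by
  have hg : HasDerivAt (fun t ↦ oscNull B (c t) (e t))
      (f t + ((B (e t) (e t) / 2) • d t + B (e t) (f t) • c t)) t := by
    have hκ := (hasDerivAt_bilin (B := B) (hc.deriv_e t ht) (hc.deriv_e t ht)).div_const 2
    rw [hB.symm (f t), add_self_div_two] at hκ
    exact (hc.deriv_e t ht).add (hκ.smul (hc.deriv_c t ht))
  have hP := (((hasDerivAt_const t (.id ℝ V)).add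
    (hasDerivAt_smulRight (B := B) hg (hc.deriv_c t ht))).sub
    (hasDerivAt_smulRight (B := B) (hc.deriv_d t ht) (hc.deriv_d t ht))).add
    (hasDerivAt_smulRight (B := B) (hc.deriv_c t ht) hg)
  refine hP.congr_deriv ?_
  clear hP
  rw [hc.normalProj_f hB ht]
  ext x
  simp only [oscNull, map_add, map_smul, add_apply, sub_apply, smul_apply, smul_eq_mul, zero_apply,
    ContinuousLinearMap.smulRight_apply]
  module

end IsFlatLift

/-- The equation `L' = (lam / t ^ 2) L ∘ (c ∧ d)` near `0⁺`. It is solved by the Calapso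
transformation and by the functional `⟨ĉ, ·⟩` of a Darboux transform `ĉ`. -/
def IsCalapsoSolution (B : V →L[ℝ] V →L[ℝ] ℝ) (lam : ℝ) (c d : ℝ → V) (L : ℝ → V →L[ℝ] W) : Prop :=
  ∀ᶠ t in 𝓝[>] 0, HasDerivAt L ((lam / t ^ 2) • (L t ∘SL skewWedge B (c t) (d t))) t

/-- The rescaled value of `L` on the curve. -/
def uComp (c : ℝ → V) (L : ℝ → V →L[ℝ] W) (t : ℝ) : W := t⁻¹ • L t (c t)

theorem smul_uComp {L : ℝ → V →L[ℝ] W} {t : ℝ} (ht : t ≠ 0) : t • uComp c L t = L t (c t) :=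
  smul_inv_smul₀ ht _

/-- The value of `L` on the first derivative of the curve. -/
def vComp (d : ℝ → V) (L : ℝ → V →L[ℝ] W) (t : ℝ) : W := L t (d t)

/-- The rescaled value of `L` on a higher derivative of the curve. -/
def wComp (e : ℝ → V) (L : ℝ → V →L[ℝ] W) (t : ℝ) : W := t • L t (e t)

/-- The restriction of `L` to the normal space of the curve. -/
def normalComp (B : V →L[ℝ] V →L[ℝ] ℝ) (c d e : ℝ → V) (L : ℝ → V →L[ℝ] W) (t : ℝ) : V →L[ℝ] W :=
  L t ∘SL normalProj B (c t) (d t) (e t)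

theorem IsFlatLift.wComp_f_eventuallyEq {L : ℝ → V →L[ℝ] W} (hB : IsScalarProduct B)
    (hc : IsFlatLift B s c d e f) (hs : s ∈ 𝓝 0) : wComp f L =ᶠ[𝓝[>] 0] fun t ↦
    t • (normalComp B c d e L t (f t) - B (e t) (e t) • vComp d L t -
      (B (e t) (f t) * t) • uComp c L t) := by
  filter_upwards [self_mem_nhdsWithin, mem_nhdsWithin_of_mem_nhds hs] with t ht hts
  have ht : t ≠ 0 := ne_of_gt ht
  simp only [wComp, normalComp, vComp, uComp, ContinuousLinearMap.comp_apply,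
    hc.normalProj_f hB hts, map_add, map_smul]
  match_scalars <;> field_simp <;> ring

namespace IsCalapsoSolution

variable {lam ω : ℝ} {L : ℝ → V →L[ℝ] W} (hB : IsScalarProduct B) (hc : IsFlatLift B s c d e f)
  (hs : s ∈ 𝓝 0) (hL : IsCalapsoSolution B lam c d L)

include hB hc hs hL

theorem isFuchsianSystem :
    IsFuchsianSystem lam (uComp c L) (vComp d L) (wComp e L) (wComp f L) := by
  have hev : ∀ᶠ t in 𝓝[>] 0, t ≠ 0 ∧ t ∈ s ∧
      HasDerivAt L ((lam / t ^ 2) • (L t ∘SL skewWedge B (c t) (d t))) t := by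
    filter_upwards [self_mem_nhdsWithin, mem_nhdsWithin_of_mem_nhds hs, hL] with t ht hts hLt
    exact ⟨ne_of_gt ht, hts, hLt⟩
  refine ⟨hev.mono ?_, hev.mono ?_, hev.mono ?_⟩ <;> rintro t ⟨ht, hts, hLt⟩ <;>
    have hframe := hc.isFlatFrame hB hts
  · refine HasDerivAt.congr_deriv
      ((hasDerivAt_inv ht).smul (hLt.clm_apply (hc.deriv_c t hts))) ?_
    simp only [vComp, uComp, smul_apply, ContinuousLinearMap.comp_apply, skewWedge_apply,
      hframe.cc, hB.symm (d t) (c t), hframe.cd, zero_smul, sub_zero, map_zero, smul_zero]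
    match_scalars <;> field_simp
  · refine HasDerivAt.congr_deriv (hLt.clm_apply (hc.deriv_d t hts)) ?_
    simp only [wComp, uComp, smul_apply, ContinuousLinearMap.comp_apply, skewWedge_apply,
      hframe.cd, hframe.dd, zero_smul, one_smul, zero_sub, map_neg]
    match_scalars <;> field_simp
  · refine HasDerivAt.congr_deriv
      ((hasDerivAt_id t).smul (hLt.clm_apply (hc.deriv_e t hts))) ?_
    simp only [wComp, vComp, smul_apply, ContinuousLinearMap.comp_apply, skewWedge_apply,
      map_smul, hframe.ce, hframe.de, id_eq, zero_smul, sub_zero]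
    match_scalars <;> field_simp

theorem hasDerivAt_normalComp :
    ∀ᶠ t in 𝓝[>] 0, HasDerivAt (normalComp B c d e L)
      ((B (normalProj B (c t) (d t) (e t) (f t))).smulRight (t • uComp c L t) +
        (B (c t)).smulRight (normalComp B c d e L t (f t))) t := by
  filter_upwards [self_mem_nhdsWithin, mem_nhdsWithin_of_mem_nhds hs, hL] with t ht hts hLt
  have hframe := hc.isFlatFrame hB hts
  refine HasDerivAt.congr_deriv (hLt.clm_comp (hc.hasDerivAt_normalProj hB hts)) ?_
  ext x
  simp only [uComp, normalComp, smul_apply, add_apply, ContinuousLinearMap.comp_apply,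
    skewWedge_apply, ContinuousLinearMap.smulRight_apply, map_add, map_smul,
    hframe.bilin_c_normalProj hB, hframe.bilin_d_normalProj hB,
    smul_inv_smul₀ (mem_Ioi.1 ht).ne', zero_smul, sub_zero, smul_zero, map_zero, zero_add]

end IsCalapsoSolution

end FlatLift

section Boundedness

variable {V W : Type*} [NormedAddCommGroup V] [NormedSpace ℝ V] [NormedAddCommGroup W]
  [NormedSpace ℝ W] {B : V →L[ℝ] V →L[ℝ] ℝ} {s : Set ℝ} {c d e f : ℝ → V}

theorem IsFlatLift.isBigO_normalProj_f (hB : IsScalarProduct B) (hc : IsFlatLift B s c d e f)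
    (hs : s ∈ 𝓝 0) :
    (fun t ↦ normalProj B (c t) (d t) (e t) (f t)) =O[𝓝[>] 0] (fun _ ↦ (1 : ℝ)) :=
  isBigO_one_of_continuousOn hs <| ContinuousOn.clm_apply
    (fun _ ht ↦ (hc.hasDerivAt_normalProj hB ht).continuousAt.continuousWithinAt) hc.continuousOn_f

theorem IsFlatLift.isBigO_c (hc : IsFlatLift B s c d e f) (hs : s ∈ 𝓝 0) :
    c =O[𝓝[>] 0] (fun _ ↦ (1 : ℝ)) :=
  (hc.tendsto_c hs).isBigO_one ℝ

theorem isBigO_id_one : (fun t : ℝ ↦ t) =O[𝓝[>] 0] (fun _ ↦ (1 : ℝ)) :=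
  (tendsto_id.mono_left nhdsWithin_le_nhds).isBigO_one ℝ

section Comparison

variable {G : Type*} [NormedAddCommGroup G] {y : ℝ → G} {L : ℝ → V →L[ℝ] W}
  (hB : IsScalarProduct B) (hc : IsFlatLift B s c d e f) (hs : s ∈ 𝓝 0)
include hB hc hs

theorem isBigO_deriv_normalComp (hu : (fun t ↦ t • uComp c L t) =O[𝓝[>] 0] y)
    (hm : normalComp B c d e L =O[𝓝[>] 0] y) :
    (fun t ↦ (B (normalProj B (c t) (d t) (e t) (f t))).smulRight (t • uComp c L t) +
      (B (c t)).smulRight (normalComp B c d e L t (f t))) =O[𝓝[>] 0] y :=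
  (isBigO_smulRight (hc.isBigO_normalProj_f hB hs) hu).add (isBigO_smulRight (hc.isBigO_c hs)
    (isBigO_clm_apply hm (isBigO_one_of_continuousOn hs hc.continuousOn_f)))

theorem isBigO_wComp_f (hu : uComp c L =O[𝓝[>] 0] y) (hv : vComp d L =O[𝓝[>] 0] y)
    (hm : normalComp B c d e L =O[𝓝[>] 0] y) : wComp f L =O[𝓝[>] 0] y := by
  have hee := isBigO_one_of_continuousOn hs hc.continuousOn_bilin_e
  have hef : (fun t ↦ B (e t) (f t)) =O[𝓝[>] 0] (fun _ ↦ (1 : ℝ)) :=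
    isBigO_one_of_continuousOn hs ((B.continuous.comp_continuousOn hc.continuousOn_e).clm_apply
      hc.continuousOn_f)
  have heft : (fun t ↦ B (e t) (f t) * t) =O[𝓝[>] 0] (fun _ ↦ (1 : ℝ)) := by
    simpa only [mul_one] using hef.mul isBigO_id_one
  have hmf := isBigO_clm_apply hm (isBigO_one_of_continuousOn hs hc.continuousOn_f)
  refine IsBigO.congr' ?_ (hc.wComp_f_eventuallyEq hB hs).symm .rfl
  exact isBigO_smul_of_isBigO_one isBigO_id_one
    ((hmf.sub (isBigO_smul_of_isBigO_one hee hv)).sub (isBigO_smul_of_isBigO_one heft hu))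

end Comparison

namespace IsCalapsoSolution

variable {ω : ℝ} {L : ℝ → V →L[ℝ] W} (hB : IsScalarProduct B) (hc : IsFlatLift B s c d e f)
  (hs : s ∈ 𝓝 0) (hω : ω ≠ 0) (hL : IsCalapsoSolution B ((ω ^ 2 + 1) / 2) c d L)

include hB hc hs hω hL

theorem isBigO_one :
    (fun t ↦ ((uComp c L t, vComp d L t, wComp e L t), normalComp B c d e L t)) =O[𝓝[>] 0]
      (fun _ ↦ (1 : ℝ)) := by
  set y := fun t ↦ ((uComp c L t, vComp d L t, wComp e L t), normalComp B c d e L t)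
  have hyy : y =O[𝓝[>] 0] y := isBigO_refl _ _
  have hu : uComp c L =O[𝓝[>] 0] y := hyy.prod_left_fst.prod_left_fst
  have hv : vComp d L =O[𝓝[>] 0] y := hyy.prod_left_fst.prod_left_snd.prod_left_fst
  have hm : normalComp B c d e L =O[𝓝[>] 0] y := hyy.prod_left_snd
  exact (hL.isFuchsianSystem hB hc hs).isBigO_one hω (hL.hasDerivAt_normalComp hB hc hs)
    (isBigO_wComp_f hB hc hs hu hv hm)
    (isBigO_deriv_normalComp hB hc hs (isBigO_smul_of_isBigO_one isBigO_id_one hu) hm)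

theorem isBigO_uComp_one : uComp c L =O[𝓝[>] 0] (fun _ ↦ (1 : ℝ)) :=
  (hL.isBigO_one hB hc hs hω).prod_left_fst.prod_left_fst

theorem isBigO_vComp_one : vComp d L =O[𝓝[>] 0] (fun _ ↦ (1 : ℝ)) :=
  (hL.isBigO_one hB hc hs hω).prod_left_fst.prod_left_snd.prod_left_fst

theorem isBigO_normalComp_one : normalComp B c d e L =O[𝓝[>] 0] (fun _ ↦ (1 : ℝ)) :=
  (hL.isBigO_one hB hc hs hω).prod_left_snd

theorem isBigO_wComp_f_one : wComp f L =O[𝓝[>] 0] (fun _ ↦ (1 : ℝ)) :=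
  isBigO_wComp_f hB hc hs (hL.isBigO_uComp_one hB hc hs hω) (hL.isBigO_vComp_one hB hc hs hω)
    (hL.isBigO_normalComp_one hB hc hs hω)

theorem exists_tendsto_meanPart [CompleteSpace W] :
    ∃ α, Tendsto (meanPart ((ω ^ 2 + 1) / 2) (uComp c L) (vComp d L) (wComp e L)) (𝓝[>] 0)
      (𝓝 α) :=
  exists_tendsto_of_deriv_isBigO_one (hL.isFuchsianSystem hB hc hs).hasDerivAt_meanPart
    (hL.isBigO_wComp_f_one hB hc hs hω)

theorem isBigO_smul_uComp : (fun t ↦ t • uComp c L t) =O[𝓝[>] 0] (· ^ 1) := by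
  simpa only [smul_eq_mul, pow_one, mul_one] using
    (isBigO_refl (fun t : ℝ ↦ t) _).smul (hL.isBigO_uComp_one hB hc hs hω)

theorem isBigO_deriv_normalComp_one :
    (fun t ↦ (B (normalProj B (c t) (d t) (e t) (f t))).smulRight (t • uComp c L t) +
      (B (c t)).smulRight (normalComp B c d e L t (f t))) =O[𝓝[>] 0] (fun _ ↦ (1 : ℝ)) :=
  isBigO_deriv_normalComp hB hc hs
    (isBigO_smul_of_isBigO_one isBigO_id_one (hL.isBigO_uComp_one hB hc hs hω))
    (hL.isBigO_normalComp_one hB hc hs hω)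

theorem exists_tendsto_normalComp [CompleteSpace W] :
    ∃ m₀, Tendsto (normalComp B c d e L) (𝓝[>] 0) (𝓝 m₀) :=
  exists_tendsto_of_deriv_isBigO_one (hL.hasDerivAt_normalComp hB hc hs)
    (hL.isBigO_deriv_normalComp_one hB hc hs hω)

theorem normalComp_isBigO_sq [CompleteSpace W]
    (h : Tendsto (normalComp B c d e L) (𝓝[>] 0) (𝓝 0)) :
    normalComp B c d e L =O[𝓝[>] 0] (· ^ 2) := by
  have hderiv := hL.hasDerivAt_normalComp hB hc hs
  have hfirst : normalComp B c d e L =O[𝓝[>] 0] (· ^ 1) := by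
    simpa only [sub_zero, zero_add] using sub_isBigO_pow_succ_of_tendsto (k := 0) hderiv
      (by simpa only [pow_zero] using hL.isBigO_deriv_normalComp_one hB hc hs hω) h
  simpa only [sub_zero, Nat.reduceAdd] using sub_isBigO_pow_succ_of_tendsto hderiv
    (isBigO_deriv_normalComp hB hc hs (hL.isBigO_smul_uComp hB hc hs hω) hfirst) h

end IsCalapsoSolution

end Boundedness

section Calapso

variable {V : Type*} [NormedAddCommGroup V] [NormedSpace ℝ V] {B : V →L[ℝ] V →L[ℝ] ℝ}
  {lam a b : ℝ} {c d y : ℝ → V} {T : ℝ → V →L[ℝ] V}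

/-- `T` is a `lam`-Calapso transformation of the curve `c` with derivative `d` on `(a, b)`, for
the polarization `dt² / t²`. -/
def IsCalapsoTransformation (B : V →L[ℝ] V →L[ℝ] ℝ) (lam a b : ℝ) (c d : ℝ → V)
    (T : ℝ → V →L[ℝ] V) : Prop :=
  ∀ t ∈ Ioo a b, HasDerivAt T ((lam / t ^ 2) • (T t ∘SL skewWedge B (c t) (d t))) t

/-- `y` is a lift of a `lam`-Darboux transform of the curve `c` with derivative `d` on `(a, b)`,
for the polarization `dt² / t²`. -/
def IsDarbouxLift (B : V →L[ℝ] V →L[ℝ] ℝ) (lam a b : ℝ) (c d y : ℝ → V) : Prop :=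
  ∀ t ∈ Ioo a b, HasDerivAt y (-(lam / t ^ 2) • skewWedge B (c t) (d t) (y t)) t

theorem IsCalapsoTransformation.isCalapsoSolution (hT : IsCalapsoTransformation B lam 0 b c d T)
    (hb : 0 < b) : IsCalapsoSolution B lam c d T :=
  eventually_of_mem (Ioo_mem_nhdsGT hb) hT

theorem IsDarbouxLift.isCalapsoSolution (hB : IsScalarProduct B)
    (hy : IsDarbouxLift B lam 0 b c d y) (hb : 0 < b) :
    IsCalapsoSolution B lam c d (B ∘ y) := by
  filter_upwards [Ioo_mem_nhdsGT hb] with t ht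
  refine (B.hasFDerivAt.comp_hasDerivAt t (hy t ht)).congr_deriv ?_
  ext x
  simp only [map_smul, smul_apply, ContinuousLinearMap.comp_apply, Function.comp_apply,
    hB.skewWedge_skew, smul_eq_mul, neg_mul_neg]

theorem IsCalapsoTransformation.apply_eq_apply (hT : IsCalapsoTransformation B lam a b c d T)
    (hy : IsDarbouxLift B lam a b c d y) {t t' : ℝ} (ht : t ∈ Ioo a b) (ht' : t' ∈ Ioo a b) :
    T t (y t) = T t' (y t') := by
  have hderiv : ∀ t ∈ Ioo a b, HasDerivAt (fun t ↦ T t (y t)) 0 t := fun t ht ↦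
    ((hT t ht).clm_apply (hy t ht)).congr_deriv <| by
      simp only [smul_apply, ContinuousLinearMap.comp_apply, map_smul, map_neg, neg_smul,
        add_neg_cancel]
  exact isOpen_Ioo.is_const_of_deriv_eq_zero isPreconnected_Ioo
    (fun t ht ↦ (hderiv t ht).differentiableAt.differentiableWithinAt)
    (fun t ht ↦ (hderiv t ht).deriv) ht ht'

variable [FiniteDimensional ℝ V]

theorem IsCalapsoTransformation.isDarbouxLift_adjoint (hB : IsScalarProduct B)
    (hT : IsCalapsoTransformation B lam a b c d T) (z : V) :
    IsDarbouxLift B lam a b c d fun t ↦ hB.musical.symm (B z ∘SL T t) := by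
  intro t ht
  have hd := hB.musical.symm.hasFDerivAt.comp_hasDerivAt t
    ((hasDerivAt_const t (B z)).clm_comp (hT t ht))
  refine hd.congr_deriv ((hB.musical.symm_apply_eq).2 ?_)
  ext x
  have hadj : ∀ x, B (hB.musical.symm (B z ∘SL T t)) x = B z (T t x) := fun x ↦ by
    rw [hB.apply_musical_symm, ContinuousLinearMap.comp_apply]
  simp only [hB.musical_apply, map_smul, smul_apply, hB.skewWedge_skew, hadj,
    ContinuousLinearMap.comp_apply, ContinuousLinearMap.zero_comp, zero_add, smul_eq_mul,
    neg_mul_neg]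

theorem IsCalapsoTransformation.bilin_apply_apply (hB : IsScalarProduct B)
    (hT : IsCalapsoTransformation B lam a b c d T) {p t : ℝ} (hp : p ∈ Ioo a b) (hTp : T p = 1)
    (ht : t ∈ Ioo a b) (x x' : V) : B (T t x) (T t x') = B x x' := by
  have hright : ∀ z, T t (hB.musical.symm (B z ∘SL T t)) = z := fun z ↦ by
    rw [hT.apply_eq_apply (hT.isDarbouxLift_adjoint hB z) ht hp, hTp, one_apply_eq_self,
      ContinuousLinearMap.one_def, ContinuousLinearMap.comp_id]
    exact hB.musical.symm_apply_apply z
  have hinj : Function.Injective (T t) :=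
    LinearMap.injective_iff_surjective.2 (Function.RightInverse.surjective hright)
  have hx : hB.musical.symm (B (T t x) ∘SL T t) = x := hinj (hright (T t x))
  rw [← ContinuousLinearMap.comp_apply, ← hB.apply_musical_symm (B (T t x) ∘SL T t), hx]

end Calapso

section ProjectiveAccumulation

variable {V : Type*} [NormedAddCommGroup V] [NormedSpace ℝ V] {b : ℝ} {γ : ℝ → V} {r : ℝ → ℝ}
  {x z : V}

/-- Suitable rescalings of the points of `γ` on `(0, b)` accumulate at `x` as the parameter tends
to `0`. For `x ≠ 0` this is accumulation at the point `[x]` of the projective space. -/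
def IsProjAccumPt (b : ℝ) (γ : ℝ → V) (x : V) : Prop :=
  ∃ (ts : ℕ → ℝ) (rs : ℕ → ℝ), (∀ i, ts i ∈ Ioo (0 : ℝ) b) ∧ Tendsto ts atTop (𝓝 0) ∧
    Tendsto (fun i ↦ rs i • γ (ts i)) atTop (𝓝 x)

namespace IsProjAccumPt

theorem exists_seq (h : IsProjAccumPt b γ x) :
    ∃ (ts : ℕ → ℝ) (rs : ℕ → ℝ), Tendsto ts atTop (𝓝[>] 0) ∧
      Tendsto (fun i ↦ rs i • γ (ts i)) atTop (𝓝 x) := by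
  obtain ⟨ts, rs, hmem, hts, hrs⟩ := h
  exact ⟨ts, rs, tendsto_nhdsWithin_iff.2 ⟨hts, .of_forall fun i ↦ (hmem i).1⟩, hrs⟩

theorem of_frequently {S : Set ℝ} (hb : 0 < b) (hS : ∃ᶠ t in 𝓝[>] 0, t ∈ S)
    (hr : Tendsto (fun t ↦ r t • γ t) (𝓝[>] 0 ⊓ 𝓟 S) (𝓝 x)) : IsProjAccumPt b γ x := by
  have : (𝓝[>] (0 : ℝ) ⊓ 𝓟 S).NeBot := frequently_mem_iff_neBot.1 hS
  have hmem : ∀ᶠ t in 𝓝[>] (0 : ℝ) ⊓ 𝓟 S, t ∈ Ioo 0 b :=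
    Eventually.filter_mono inf_le_left (Ioo_mem_nhdsGT hb)
  obtain ⟨ts, hts⟩ := exists_seq_tendsto (𝓝[>] (0 : ℝ) ⊓ 𝓟 S)
  obtain ⟨N, hN⟩ := eventually_atTop.1 (hts.eventually hmem)
  have hshift := tendsto_add_atTop_nat N
  exact ⟨fun i ↦ ts (i + N), fun i ↦ r (ts (i + N)), fun i ↦ hN _ (Nat.le_add_left N i),
    (hts.comp hshift).mono_right (inf_le_left.trans nhdsWithin_le_nhds),
    hr.comp (hts.comp hshift)⟩

theorem apply_smul_eq_of_tendsto (hz : IsProjAccumPt b γ z)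
    (hr : Tendsto (fun t ↦ r t • γ t) (𝓝[>] 0) (𝓝 x)) (f : V →L[ℝ] ℝ) : f x • z = f z • x := by
  obtain ⟨ts, rs, hts, hrs⟩ := hz.exists_seq
  have hx := hr.comp hts
  refine tendsto_nhds_unique (((f.continuous.tendsto x).comp hx).smul hrs) ?_
  refine (((f.continuous.tendsto z).comp hrs).smul hx).congr fun i ↦ ?_
  simp only [Function.comp_apply, map_smul, smul_smul, smul_eq_mul]
  ring_nf

theorem bilin_self_eq_zero {B : V →L[ℝ] V →L[ℝ] ℝ} (hx : IsProjAccumPt b γ x)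
    (hnull : ∀ᶠ t in 𝓝[>] 0, B (γ t) (γ t) = 0) : B x x = 0 := by
  obtain ⟨ts, rs, hts, hrs⟩ := hx.exists_seq
  refine tendsto_nhds_unique (tendsto_bilin hrs hrs) (tendsto_const_nhds.congr' ?_)
  filter_upwards [hts.eventually hnull] with i hi
  rw [map_smul, map_smul, smul_apply, hi, smul_zero, smul_zero]

end IsProjAccumPt

end ProjectiveAccumulation

section LimitCircle

variable {V : Type*} [NormedAddCommGroup V] [NormedSpace ℝ V] {B : V →L[ℝ] V →L[ℝ] ℝ}
  {s : Set ℝ} {c d e f : ℝ → V} {ω b α : ℝ} {T : ℝ → V →L[ℝ] V} {z : V}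
  (hB : IsScalarProduct B) (hc : IsFlatLift B s c d e f) (hs : s ∈ 𝓝 0) (hω : ω ≠ 0)
  (hT : IsCalapsoSolution B ((ω ^ 2 + 1) / 2) c d T)
  (hiso : ∀ᶠ t in 𝓝[>] 0, ∀ x y, B (T t x) (T t y) = B x y)
  (hz : IsProjAccumPt b (fun t ↦ T t (c t)) z)

include hB hc hs hiso in
theorem bilin_meanPart_apply {lam : ℝ} : ∀ᶠ t in 𝓝[>] 0,
    B (meanPart lam (uComp c T) (vComp d T) (wComp e T) t) (T t (c t)) = -t := by
  filter_upwards [hiso, mem_nhdsWithin_of_mem_nhds hs] with t ht hts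
  have hframe := hc.isFlatFrame hB hts
  simp only [meanPart, uComp, vComp, wComp, map_smul, map_add, map_sub,
    smul_apply, add_apply, sub_apply, ht, hframe.cc, hB.symm _ (c t), hframe.cd, hframe.ce,
    smul_eq_mul]
  ring

variable [CompleteSpace V] {L : ℝ → V →L[ℝ] ℝ} (hL : L =ᶠ[𝓝[>] 0] fun t ↦ B z ∘SL T t)
include hB hc hs hω hT hiso hz hL

theorem meanPart_limit_ne_zero (hz0 : z ≠ 0)
    (hα : Tendsto (meanPart ((ω ^ 2 + 1) / 2) (uComp c L) (vComp d L) (wComp e L)) (𝓝[>] 0) (𝓝 α)) :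
    α ≠ 0 := by
  rintro rfl
  obtain ⟨ts, rs, hts, hrs⟩ := hz.exists_seq
  obtain ⟨A, hA⟩ := hT.exists_tendsto_meanPart hB hc hs hω
  have hAz : B z A = 0 := tendsto_nhds_unique
    ((((B z).continuous.tendsto A).comp hA).congr' (hL.mono fun t ht ↦ by
      simp only [Function.comp_apply, meanPart, uComp, vComp, wComp, map_add, map_sub, map_smul,
        ContinuousLinearMap.comp_apply, ht])) hα
  have hmean : Tendsto (fun i ↦ -(rs i * ts i)) atTop (𝓝 0) := by
    rw [← hAz, hB.symm]
    refine (tendsto_bilin (hA.comp hts) hrs).congr' ?_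
    filter_upwards [hts.eventually (bilin_meanPart_apply hB hc hs hiso)] with i hi
    rw [map_smul, Function.comp_apply, hi, smul_eq_mul, mul_neg]
  have hmul : Tendsto (fun i ↦ rs i * ts i) atTop (𝓝 0) := by simpa using hmean.neg
  have hu := (isBigO_one_iff ℝ).1 ((hT.isBigO_uComp_one hB hc hs hω).comp_tendsto hts)
  refine hz0 (tendsto_nhds_unique hrs ((hmul.zero_smul_isBoundedUnder_le hu).congr' ?_))
  filter_upwards [hts.eventually self_mem_nhdsWithin] with i hi
  rw [Function.comp_apply, uComp, mul_smul, smul_inv_smul₀ (mem_Ioi.1 hi).ne']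

theorem tendsto_normalComp_zero :
    Tendsto (normalComp B c d e L) (𝓝[>] 0) (𝓝 0) := by
  obtain ⟨ts, rs, hts, hrs⟩ := hz.exists_seq
  obtain ⟨N, hN⟩ := hT.exists_tendsto_normalComp hB hc hs hω
  have hNz : B z ∘SL N = 0 := by
    ext x
    rw [ContinuousLinearMap.comp_apply, hB.symm, zero_apply]
    have hNx : Tendsto (fun i ↦ normalComp B c d e T (ts i) x) atTop (𝓝 (N x)) :=
      ((ContinuousLinearMap.apply ℝ V x).continuous.tendsto N).comp (hN.comp hts)
    refine tendsto_nhds_unique (tendsto_bilin hNx hrs) (tendsto_const_nhds.congr' ?_)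
    filter_upwards [hts.eventually hiso, hts.eventually (mem_nhdsWithin_of_mem_nhds hs)]
      with i hi his
    simp only [normalComp, ContinuousLinearMap.comp_apply, map_smul, hi,
      hB.symm _ (c (ts i)), (hc.isFlatFrame hB his).bilin_c_normalProj hB, smul_zero]
  rw [← hNz]
  refine (((continuous_const.clm_comp continuous_id).tendsto N).comp hN).congr' ?_
  filter_upwards [hL] with t ht
  rw [normalComp, ht, ContinuousLinearMap.comp_assoc]
  rfl

end LimitCircle

section DarbouxLimit

variable {V : Type*} [NormedAddCommGroup V] [NormedSpace ℝ V] {B : V →L[ℝ] V →L[ℝ] ℝ}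
  {s : Set ℝ} {c d e f : ℝ → V} {ω b α : ℝ} {y : ℝ → V}
  (hB : IsScalarProduct B) (hc : IsFlatLift B s c d e f) (hs : s ∈ 𝓝 0)
  (hnull : ∀ᶠ t in 𝓝[>] 0, B (y t) (y t) = 0)

include hB in
theorem normalProj_isBigO [FiniteDimensional ℝ V] {g : ℝ → ℝ}
    (hm : normalComp B c d e (B ∘ y) =O[𝓝[>] 0] g) :
    (fun t ↦ normalProj B (c t) (d t) (e t) (y t)) =O[𝓝[>] 0] g := by
  refine (((hB.musical.symm : _ →L[ℝ] V).isBigO_comp _ _).trans hm).congr_left fun t ↦ ?_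
  refine (hB.musical.symm_apply_eq).2 ?_
  ext x
  rw [hB.musical_apply, hB.bilin_normalProj_left]
  rfl

include hB hc hs hnull in
theorem bilin_normalProj_self_eq : ∀ᶠ t in 𝓝[>] 0,
    B (normalProj B (c t) (d t) (e t) (y t)) (normalProj B (c t) (d t) (e t) (y t)) =
      2 * (B (oscNull B (c t) (e t)) (y t) * (t • uComp c (B ∘ y) t)) - vComp d (B ∘ y) t ^ 2 := by
  filter_upwards [hnull, mem_nhdsWithin_of_mem_nhds hs, self_mem_nhdsWithin] with t ht hts htpos
  rw [(hc.isFlatFrame hB hts).bilin_normalProj_self hB, ht, smul_uComp (mem_Ioi.1 htpos).ne', vComp,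
    Function.comp_apply, hB.symm (y t), hB.symm (y t), zero_add]

theorem tendsto_bilin_normalProj_self
    (hP : (fun t ↦ normalProj B (c t) (d t) (e t) (y t)) =O[𝓝[>] 0] (· ^ 2)) :
    Tendsto (fun t ↦ B (normalProj B (c t) (d t) (e t) (y t))
      (normalProj B (c t) (d t) (e t) (y t))) (𝓝[>] 0) (𝓝 0) := by
  have hlim := hP.trans_tendsto (tendsto_pow_succ_nhdsGT_zero 1)
  simpa only [map_zero] using tendsto_bilin (B := B) hlim hlim

include hB hc hs hnull in
theorem tendsto_sq_sub_two_mul (hu : (fun t ↦ t • uComp c (B ∘ y) t) =O[𝓝[>] 0] (· ^ 1))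
    (hP : (fun t ↦ normalProj B (c t) (d t) (e t) (y t)) =O[𝓝[>] 0] (· ^ 2)) :
    Tendsto (fun t ↦ vComp d (B ∘ y) t ^ 2 - 2 * uComp c (B ∘ y) t * wComp e (B ∘ y) t)
      (𝓝[>] 0) (𝓝 0) := by
  have htu := hu.trans_tendsto (tendsto_pow_succ_nhdsGT_zero 0)
  have hκ := (hc.continuousOn_bilin_e.continuousAt hs).tendsto.mono_left
    (nhdsWithin_le_nhds (s := Ioi 0))
  have hlim := ((hκ.mul htu).mul htu).sub (tendsto_bilin_normalProj_self (B := B) hP)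
  rw [mul_zero, sub_zero] at hlim
  refine hlim.congr' ?_
  filter_upwards [bilin_normalProj_self_eq hB hc hs hnull, self_mem_nhdsWithin] with t ht htpos
  have hcy := smul_uComp (c := c) (L := B ∘ y) (mem_Ioi.1 htpos).ne'
  rw [Function.comp_apply] at hcy
  rw [ht, bilin_oscNull, hB.symm (e t) (y t), hB.symm (c t) (y t), ← hcy, wComp,
    Function.comp_apply]
  simp only [smul_eq_mul]
  ring

include hB hc hs in
theorem isBigO_smul_add_wComp_smul (hu : (fun t ↦ t • uComp c (B ∘ y) t) =O[𝓝[>] 0] (· ^ 1))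
    (hv : vComp d (B ∘ y) =O[𝓝[>] 0] (fun _ ↦ (1 : ℝ)))
    (hP : (fun t ↦ normalProj B (c t) (d t) (e t) (y t)) =O[𝓝[>] 0] (· ^ 2)) :
    (fun t ↦ t • y t + wComp e (B ∘ y) t • c t) =O[𝓝[>] 0] (fun t ↦ t) := by
  have hu := (hu.trans_tendsto (tendsto_pow_succ_nhdsGT_zero 0)).isBigO_one ℝ
  have hP := (hP.trans_tendsto (tendsto_pow_succ_nhdsGT_zero 1)).isBigO_one ℝ
  have hκ := isBigO_one_of_continuousOn hs (hc.continuousOn_bilin_e.div_const 2)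
  have hd := isBigO_one_of_continuousOn hs hc.continuousOn_d
  have hg := (hc.tendsto_oscNull hs).isBigO_one ℝ
  have hz := ((hP.sub (isBigO_smul_of_isBigO_one hκ (isBigO_smul_of_isBigO_one hu
    (hc.isBigO_c hs)))).add (isBigO_smul_of_isBigO_one hv hd)).sub
    (isBigO_smul_of_isBigO_one hu hg)
  have htz := (isBigO_refl (fun t : ℝ ↦ t) (𝓝[>] 0)).smul hz
  simp only [smul_eq_mul, mul_one] at htz
  refine htz.congr' ?_ .rfl
  filter_upwards [self_mem_nhdsWithin] with t ht
  have hcy := smul_uComp (c := c) (L := B ∘ y) (mem_Ioi.1 ht).ne'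
  rw [smul_eq_mul, Function.comp_apply, hB.symm] at hcy
  conv_rhs => rw [eq_normalProj_sub (B := B) (c t) (d t) (e t) (y t)]
  rw [hcy, wComp, vComp, Function.comp_apply, hB.symm (y t), hB.symm (y t), smul_eq_mul]
  module

include hc hs in
theorem isProjAccumPt_c (hb : 0 < b) {δ : ℝ} (hδ : 0 < δ)
    (hfreq : ∃ᶠ t in 𝓝[>] 0, δ ≤ |wComp e (B ∘ y) t|)
    (hO : (fun t ↦ t • y t + wComp e (B ∘ y) t • c t) =O[𝓝[>] 0] (fun t ↦ t)) :
    IsProjAccumPt b y (c 0) := by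
  set w := wComp e (B ∘ y)
  have hS : ∀ᶠ t in 𝓝[>] 0 ⊓ 𝓟 {t | δ ≤ |w t|}, δ ≤ |w t| :=
    mem_inf_of_right (mem_principal_self _)
  have hzero : Tendsto (fun t ↦ (w t)⁻¹ • (t • y t + w t • c t))
      (𝓝[>] 0 ⊓ 𝓟 {t | δ ≤ |w t|}) (𝓝 0) :=
    (isBigO_smul_of_isBigO_one (isBigO_inv_one hδ hS) (hO.mono inf_le_left)).trans_tendsto
      (tendsto_id.mono_left (inf_le_left.trans nhdsWithin_le_nhds))
  have hlim := ((hc.tendsto_c hs).mono_left inf_le_left).sub hzero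
  rw [sub_zero] at hlim
  refine .of_frequently (r := fun t ↦ -(w t)⁻¹ * t) hb hfreq (hlim.congr' ?_)
  filter_upwards [hS] with t ht
  rw [smul_add, inv_smul_smul₀ (abs_pos.1 (hδ.trans_le ht))]
  module

include hB hc hs in
theorem tendsto_oscNull_of_tendsto_normalProj {l : Filter ℝ} (hl : l ≤ 𝓝[>] 0) {x : ℝ → V}
    (hx : ∀ᶠ t in l, B (x t) (x t) = 0 ∧ B (c t) (x t) = -1 ∧ B (d t) (x t) = 0)
    (hk : Tendsto (fun t ↦ normalProj B (c t) (d t) (e t) (x t)) l (𝓝 0)) :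
    Tendsto x l (𝓝 (oscNull B (c 0) (e 0))) := by
  have hlim := (((hc.tendsto_oscNull hs).mono_left hl).add hk).add
    (((tendsto_bilin (B := B) hk hk).div_const 2).smul ((hc.tendsto_c hs).mono_left hl))
  simp only [map_zero, zero_div, zero_smul, add_zero] at hlim
  refine hlim.congr' ?_
  filter_upwards [hx, hl (mem_nhdsWithin_of_mem_nhds hs)] with t ⟨hxx, hcx, hdx⟩ hts
  exact ((hc.isFlatFrame hB hts).eq_oscNull_add hB hxx hcx hdx).symm

include hB hc hs hnull in
theorem isProjAccumPt_oscNull (hb : 0 < b) {δ : ℝ} (hδ : 0 < δ)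
    (hfreq : ∃ᶠ t in 𝓝[>] 0, vComp d (B ∘ y) t = 0 ∧ δ ≤ |uComp c (B ∘ y) t|)
    (hP : (fun t ↦ normalProj B (c t) (d t) (e t) (y t)) =O[𝓝[>] 0] (· ^ 2)) :
    IsProjAccumPt b y (oscNull B (c 0) (e 0)) := by
  set u := uComp c (B ∘ y)
  set v := vComp d (B ∘ y)
  set S := {t | v t = 0 ∧ δ ≤ |u t|}
  have hS : ∀ᶠ t in 𝓝[>] 0 ⊓ 𝓟 S, v t = 0 ∧ δ ≤ |u t| := mem_inf_of_right (mem_principal_self _)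
  refine .of_frequently (r := fun t ↦ -((u t)⁻¹ * t⁻¹)) hb hfreq
    (tendsto_oscNull_of_tendsto_normalProj hB hc hs inf_le_left ?_ ?_)
  · filter_upwards [hS, mem_inf_of_left self_mem_nhdsWithin, mem_inf_of_left hnull]
      with t ⟨hvt, hut⟩ ht hyt
    have hu0 : u t ≠ 0 := abs_pos.1 (hδ.trans_le hut)
    have ht0 : t ≠ 0 := (mem_Ioi.1 ht).ne'
    have hcy : B (c t) (y t) = t * u t := by
      rw [hB.symm, ← smul_eq_mul, smul_uComp ht0, Function.comp_apply]
    have hdy : B (d t) (y t) = 0 := (hB.symm _ _).trans hvt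
    simp only [map_smul, smul_apply, hyt, hcy, hdy, smul_eq_mul, mul_zero, and_true, true_and]
    field_simp
  · have hquot : (fun t ↦ normalProj B (c t) (d t) (e t) (-((u t)⁻¹ * t⁻¹) • y t))
        =O[𝓝[>] 0 ⊓ 𝓟 S] (fun t ↦ -t⁻¹ * t ^ 2) :=
      (isBigO_smul_of_isBigO_one (isBigO_inv_one hδ (hS.mono fun t ht ↦ ht.2))
        (((isBigO_refl (fun t : ℝ ↦ -t⁻¹) _).smul hP).mono inf_le_left)).congr_left fun t ↦ by
          rw [map_smul, smul_smul, mul_neg]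
    refine hquot.trans_tendsto (((tendsto_id.mono_left
      (inf_le_left.trans nhdsWithin_le_nhds)).neg.congr' ?_).trans_eq (by rw [neg_zero]))
    filter_upwards [mem_inf_of_left self_mem_nhdsWithin] with t ht
    rw [id, sq, neg_mul, inv_mul_cancel_left₀ (mem_Ioi.1 ht).ne']

include hc hs in
theorem isLittleO_normalProj {lam : ℝ} (hα0 : α ≠ 0)
    (hα : Tendsto (meanPart lam (uComp c (B ∘ y)) (vComp d (B ∘ y)) (wComp e (B ∘ y))) (𝓝[>] 0)
      (𝓝 α))
    (hP : (fun t ↦ normalProj B (c t) (d t) (e t) (y t)) =O[𝓝[>] 0] (· ^ 2)) :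
    (fun t ↦ normalProj B (c t) (d t) (e t) (y t)) =o[𝓝[>] 0] y := by
  have hsq : (· ^ 2) =o[𝓝[>] 0] (fun t : ℝ ↦ t) :=
    (isLittleO_pow_id one_lt_two).mono nhdsWithin_le_nhds
  refine (hP.trans_isLittleO hsq).trans_isBigO ?_
  have hcont : ContinuousOn (fun t ↦ lam • c t - t • d t + t ^ 2 • e t) s :=
    ((hc.continuousOn_c.const_smul lam).sub (continuousOn_id.smul hc.continuousOn_d)).add
      ((continuousOn_id.pow 2).smul hc.continuousOn_e)
  refine (isBigO_of_div_tendsto_nhds_of_ne_zero (hα.congr' ?_) hα0).trans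
    (isBigO_clm_apply (B.isBigO_comp y _) (isBigO_one_of_continuousOn hs hcont))
  filter_upwards [self_mem_nhdsWithin] with t ht
  have ht : t ≠ 0 := (mem_Ioi.1 ht).ne'
  simp only [meanPart, uComp, vComp, wComp, Function.comp_apply, map_add, map_sub, map_smul,
    smul_eq_mul]
  field_simp

include hB hc hs in
theorem IsProjAccumPt.mem_span_osc
    (hPy : (fun t ↦ normalProj B (c t) (d t) (e t) (y t)) =o[𝓝[>] 0] y) {x : V}
    (hx : IsProjAccumPt b y x) : x ∈ Submodule.span ℝ {c 0, d 0, e 0} := by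
  obtain ⟨ts, rs, hts, hrs⟩ := hx.exists_seq
  have hcont := (hc.hasDerivAt_normalProj hB (mem_of_mem_nhds hs)).continuousAt
  have hPx : Tendsto (fun i ↦ normalProj B (c (ts i)) (d (ts i)) (e (ts i)) (rs i • y (ts i)))
      atTop (𝓝 (normalProj B (c 0) (d 0) (e 0) x)) :=
    (isBoundedBilinearMap_apply.continuous.tendsto (normalProj B (c 0) (d 0) (e 0), x)).comp
      ((hcont.tendsto.comp (hts.mono_right nhdsWithin_le_nhds)).prodMk_nhds hrs)
  refine mem_span_of_normalProj_eq_zero (tendsto_nhds_unique hPx ?_)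
  have hsmall := (isBigO_refl rs atTop).smul_isLittleO (hPy.comp_tendsto hts)
  refine ((isLittleO_one_iff ℝ).1 (hsmall.trans_isBigO (hrs.isBigO_one ℝ))).congr fun i ↦ ?_
  simp only [Function.comp_apply, map_smul]

end DarbouxLimit

section ExceptionalDarboux

variable {V : Type*} [NormedAddCommGroup V] [NormedSpace ℝ V] {B : V →L[ℝ] V →L[ℝ] ℝ}
  {s : Set ℝ} {c d e f y : ℝ → V} {T : ℝ → V →L[ℝ] V} {ω α lam b p : ℝ}

theorem isFlatLift_of_contDiffOn (hs : IsOpen s) (hc : ContDiffOn ℝ 3 c s)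
    (hnull : ∀ t ∈ s, B (c t) (c t) = 0) (hunit : ∀ t ∈ s, B (deriv c t) (deriv c t) = 1) :
    IsFlatLift B s c (deriv c) (deriv (deriv c)) (deriv (deriv (deriv c))) := by
  have hd : ContDiffOn ℝ 2 (deriv c) s := hc.deriv_of_isOpen hs (by norm_num)
  have he : ContDiffOn ℝ 1 (deriv (deriv c)) s := hd.deriv_of_isOpen hs (by norm_num)
  have hasDerivAt_of_contDiffOn {m : WithTop ℕ∞} {x : ℝ → V} (hx : ContDiffOn ℝ m x s)
      (hm : m ≠ 0) : ∀ t ∈ s, HasDerivAt x (deriv x t) t := fun t ht ↦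
    ((hx.differentiableOn hm).differentiableAt (hs.mem_nhds ht)).hasDerivAt
  exact
    { isOpen := hs
      deriv_c := hasDerivAt_of_contDiffOn hc (by norm_num)
      deriv_d := hasDerivAt_of_contDiffOn hd (by norm_num)
      deriv_e := hasDerivAt_of_contDiffOn he one_ne_zero
      continuousOn_f := he.continuousOn_deriv_of_isOpen hs le_rfl
      null := hnull
      unit := hunit }

theorem isProjAccumPt_c_and_oscNull (hB : IsScalarProduct B) (hc : IsFlatLift B s c d e f)
    (hs : s ∈ 𝓝 0) (hω : 0 < ω) (hb : 0 < b)
    (hy : IsCalapsoSolution B ((ω ^ 2 + 1) / 2) c d (B ∘ y))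
    (hnull : ∀ᶠ t in 𝓝[>] 0, B (y t) (y t) = 0) (hα0 : α ≠ 0)
    (hα : Tendsto (meanPart ((ω ^ 2 + 1) / 2) (uComp c (B ∘ y)) (vComp d (B ∘ y))
      (wComp e (B ∘ y))) (𝓝[>] 0) (𝓝 α))
    (hP : (fun t ↦ normalProj B (c t) (d t) (e t) (y t)) =O[𝓝[>] 0] (· ^ 2)) :
    IsProjAccumPt b y (c 0) ∧ IsProjAccumPt b y (oscNull B (c 0) (e 0)) := by
  have hsys := hy.isFuchsianSystem hB hc hs
  have hu := hy.isBigO_smul_uComp hB hc hs hω.ne'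
  obtain ⟨ρ, φ, hρ, hfst, hsnd⟩ := hsys.exists_phase hω
    (hy.isBigO_wComp_f_one hB hc hs hω.ne') hα0 hα (tendsto_sq_sub_two_mul hB hc hs hnull hu hP)
  obtain ⟨δ, hδ, hw⟩ := exists_frequently_le_abs_w hω hρ hα hfst hsnd
  obtain ⟨δ', hδ', hv⟩ := hsys.exists_frequently_v_eq_zero hω hα0 hρ hα hfst hsnd
  exact ⟨isProjAccumPt_c hc hs hb hδ hw (isBigO_smul_add_wComp_smul hB hc hs hu
    (hy.isBigO_vComp_one hB hc hs hω.ne') hP), isProjAccumPt_oscNull hB hc hs hnull hb hδ' hv hP⟩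

theorem IsFlatFrame.eq_zero_of_tendsto_smul (h : IsFlatFrame B (c 0) (d 0) (e 0))
    (hcy : IsProjAccumPt b y (c 0)) (hgy : IsProjAccumPt b y (oscNull B (c 0) (e 0)))
    {r : ℝ → ℝ} {x : V} (hr : Tendsto (fun t ↦ r t • y t) (𝓝[>] 0) (𝓝 x)) : x = 0 := by
  have hcx : B (c 0) x = 0 := by
    have hsmul := hcy.apply_smul_eq_of_tendsto hr (B (c 0))
    rw [h.cc, zero_smul] at hsmul
    exact (smul_eq_zero.1 hsmul).resolve_right h.ne_zero
  have hsmul := hgy.apply_smul_eq_of_tendsto hr (B (c 0))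
  rwa [hcx, h.bilin_c_oscNull, zero_smul, neg_one_smul, zero_eq_neg] at hsmul

variable [FiniteDimensional ℝ V] (hB : IsScalarProduct B)
  (hT : IsCalapsoTransformation B lam 0 b c d T) (hp : p ∈ Ioo 0 b) (hTp : T p = 1)
  (hy : IsDarbouxLift B lam 0 b c d y)

section

include hB hT hp hTp

theorem IsCalapsoTransformation.eventually_bilin_apply_apply :
    ∀ᶠ t in 𝓝[>] 0, ∀ x x', B (T t x) (T t x') = B x x' := by
  filter_upwards [Ioo_mem_nhdsGT (hp.1.trans hp.2)] with t ht
  exact hT.bilin_apply_apply hB hp hTp ht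

include hy

theorem IsDarbouxLift.comp_eventuallyEq : B ∘ y =ᶠ[𝓝[>] 0] fun t ↦ B (y p) ∘SL T t := by
  filter_upwards [Ioo_mem_nhdsGT (hp.1.trans hp.2)] with t ht
  have hyp : y p = T t (y t) := by rw [hT.apply_eq_apply hy ht hp, hTp, one_apply_eq_self]
  ext x
  rw [ContinuousLinearMap.comp_apply, hyp, hT.bilin_apply_apply hB hp hTp ht, Function.comp_apply]

theorem IsDarbouxLift.bilin_self_eq {t : ℝ} (ht : t ∈ Ioo 0 b) :
    B (y t) (y t) = B (y p) (y p) := by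
  rw [← hT.bilin_apply_apply hB hp hTp ht, hT.apply_eq_apply hy ht hp, hTp, one_apply_eq_self]

end

variable (hc : IsFlatLift B s c d e f) (hs : s ∈ 𝓝 0)
  (hz : IsProjAccumPt b (fun t ↦ T t (c t)) (y p))
include hB hT hp hTp hy hc hs hz

theorem eventually_bilin_self_eq_zero : ∀ᶠ t in 𝓝[>] 0, B (y t) (y t) = 0 := by
  have hTc : ∀ᶠ t in 𝓝[>] 0, B (T t (c t)) (T t (c t)) = 0 := by
    filter_upwards [hT.eventually_bilin_apply_apply hB hp hTp, mem_nhdsWithin_of_mem_nhds hs]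
      with t hiso hts
    rw [hiso, hc.null t hts]
  filter_upwards [Ioo_mem_nhdsGT (hp.1.trans hp.2)] with t ht
  rw [hy.bilin_self_eq hB hT hp hTp ht, hz.bilin_self_eq_zero hTc]

variable (hω : ω ≠ 0) (hlam : lam = (ω ^ 2 + 1) / 2)
include hω hlam

theorem exists_tendsto_meanPart_ne_zero (hyp : y p ≠ 0) :
    ∃ α ≠ 0, Tendsto (meanPart lam (uComp c (B ∘ y)) (vComp d (B ∘ y)) (wComp e (B ∘ y)))
      (𝓝[>] 0) (𝓝 α) := by
  subst hlam
  have hb := hp.1.trans hp.2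
  obtain ⟨α, hα⟩ := (hy.isCalapsoSolution hB hb).exists_tendsto_meanPart hB hc hs hω
  exact ⟨α, meanPart_limit_ne_zero hB hc hs hω (hT.isCalapsoSolution hb)
    (hT.eventually_bilin_apply_apply hB hp hTp) hz (hy.comp_eventuallyEq hB hT hp hTp) hyp hα, hα⟩

theorem normalProj_isBigO_sq :
    (fun t ↦ normalProj B (c t) (d t) (e t) (y t)) =O[𝓝[>] 0] (· ^ 2) := by
  subst hlam
  have hb := hp.1.trans hp.2
  exact normalProj_isBigO hB ((hy.isCalapsoSolution hB hb).normalComp_isBigO_sq hB hc hs hω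
    (tendsto_normalComp_zero hB hc hs hω (hT.isCalapsoSolution hb)
      (hT.eventually_bilin_apply_apply hB hp hTp) hz (hy.comp_eventuallyEq hB hT hp hTp)))

end ExceptionalDarboux

theorem stmt19_general {V : Type*} [NormedAddCommGroup V] [NormedSpace ℝ V]
    [FiniteDimensional ℝ V] {B : V →L[ℝ] V →L[ℝ] ℝ} (hB : IsScalarProduct B) {ε b lam p : ℝ}
    (hε : 0 < ε) {c : ℝ → V} (hc : ContDiffOn ℝ 3 c (Ioo (-ε) b))
    (hcnull : ∀ t ∈ Ioo (-ε) b, B (c t) (c t) = 0)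
    (hcreg : ∀ t ∈ Ioo (-ε) b, B (deriv c t) (deriv c t) = 1)
    (hlam : 1 < 2 * lam) (hp : p ∈ Ioo 0 b) {T : ℝ → V →L[ℝ] V} (hTp : T p = 1)
    (hT : IsCalapsoTransformation B lam 0 b c (deriv c) T) {y : ℝ → V}
    (hy : IsDarbouxLift B lam 0 b c (deriv c) y) (hyp : y p ≠ 0)
    (haccum : IsProjAccumPt b (fun t ↦ T t (c t)) (y p)) :
    (∀ x, IsProjAccumPt b y x →
      x ∈ Submodule.span ℝ {c 0, deriv c 0, deriv (deriv c) 0} ∧ B x x = 0) ∧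
    IsProjAccumPt b y (c 0) ∧
    (∃ cb ∈ Submodule.span ℝ {c 0, deriv c 0, deriv (deriv c) 0},
      B cb cb = 0 ∧ B cb (c 0) = -1 ∧ B cb (deriv c 0) = 0) ∧
    (∀ cb ∈ Submodule.span ℝ {c 0, deriv c 0, deriv (deriv c) 0},
      B cb cb = 0 → B cb (c 0) = -1 → B cb (deriv c 0) = 0 → IsProjAccumPt b y cb) ∧
    ¬ ∃ x ≠ 0, ∃ r : ℝ → ℝ, Tendsto (fun t ↦ r t • y t) (𝓝[>] 0) (𝓝 x) := by
  have hb : 0 < b := hp.1.trans hp.2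
  have hs : Ioo (-ε) b ∈ 𝓝 (0 : ℝ) := Ioo_mem_nhds (neg_neg_iff_pos.2 hε) hb
  have hlift := isFlatLift_of_contDiffOn isOpen_Ioo hc hcnull hcreg
  have hframe := hlift.isFlatFrame hB (mem_of_mem_nhds hs)
  obtain ⟨ω, hω, rfl⟩ : ∃ ω > 0, lam = (ω ^ 2 + 1) / 2 :=
    ⟨√(2 * lam - 1), Real.sqrt_pos.2 (by linarith), by
      rw [Real.sq_sqrt (by linarith)]; ring⟩
  have hnull := eventually_bilin_self_eq_zero hB hT hp hTp hy hlift hs haccum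
  have hP := normalProj_isBigO_sq hB hT hp hTp hy hlift hs haccum hω.ne' rfl
  obtain ⟨α, hα0, hα⟩ :=
    exists_tendsto_meanPart_ne_zero hB hT hp hTp hy hlift hs haccum hω.ne' rfl hyp
  obtain ⟨hc₀, hosc⟩ := isProjAccumPt_c_and_oscNull hB hlift hs hω hb (hy.isCalapsoSolution hB hb)
    hnull hα0 hα hP
  refine ⟨fun x hx ↦ ⟨hx.mem_span_osc hB hlift hs (isLittleO_normalProj hlift hs hα0 hα hP),
    hx.bilin_self_eq_zero hnull⟩, hc₀, ⟨_, oscNull_mem_span, hframe.bilin_oscNull_self hB,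
    (hB.symm _ _).trans hframe.bilin_c_oscNull, hframe.bilin_oscNull_d hB⟩,
    fun cb hcb hnull' hcbc hcbd ↦ hframe.eq_oscNull hB hcb hnull' hcbc hcbd ▸ hosc, ?_⟩
  rintro ⟨x, hx0, r, hr⟩
  exact hx0 (hframe.eq_zero_of_tendsto_smul hc₀ hosc hr)

section Minkowski

/-- The Minkowski inner product as a continuous bilinear form. -/
def minkForm (n : ℕ) : E n →L[ℝ] E n →L[ℝ] ℝ :=
  (LinearMap.mk₂ ℝ mink mink_add_left mink_smul_left mink_add_right
    fun r x y ↦ mink_smul_right x r y).toContinuousBilinearMap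

theorem mink_single (x : E n) (i : Fin (n + 2)) :
    mink x (EuclideanSpace.single i 1) = (if i = Fin.last (n + 1) then (-1 : ℝ) else 1) * x i := by
  simp [mink]

theorem isScalarProduct_minkForm (n : ℕ) : IsScalarProduct (minkForm n) where
  symm := mink_comm
  injective x y hxy := by
    ext i
    have hi : mink x (EuclideanSpace.single i 1) = mink y (EuclideanSpace.single i 1) :=
      DFunLike.congr_fun hxy _
    rw [mink_single, mink_single] at hi
    exact mul_left_cancel₀ (by split_ifs <;> norm_num) hi

end Minkowski

/-- STATEMENT 19 (Theorem 5.7, exceptional case: a Darboux transform whose initial point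
lies on the limit circle of the Calapso transform approaches the curvature circle at the
singularity, has at least two distinct accumulation points there, hence does not
converge). -/
theorem stmt19 {n : ℕ} (ε b : ℝ) (hε : 0 < ε) (hb : 0 < b)
    (c : ℝ → E n) (hc : ContDiffOn ℝ (⊤ : ℕ∞) c (Set.Ioo (-ε) b))
    (hcnull : ∀ t ∈ Set.Ioo (-ε) b, mink (c t) (c t) = 0)
    (hcne : ∀ t ∈ Set.Ioo (-ε) b, c t ≠ 0)
    (hcreg : ∀ t ∈ Set.Ioo (-ε) b, mink (deriv c t) (deriv c t) = 1)
    (lam : ℝ) (hlam : 1 < 2 * lam)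
    (p : ℝ) (hp : p ∈ Set.Ioo (0:ℝ) b)
    (T : ℝ → E n →L[ℝ] E n) (hTp : T p = 1)
    (hT : ∀ t ∈ Set.Ioo (0:ℝ) b,
      HasDerivAt T ((lam / t ^ 2) • (T t * wedge (c t) (deriv c t))) t)
    (ch : ℝ → E n)
    (hchne : ∀ t ∈ Set.Ioo (0:ℝ) b, ch t ≠ 0)
    (hchnull : ∀ t ∈ Set.Ioo (0:ℝ) b, mink (ch t) (ch t) = 0)
    (hch : ∀ t ∈ Set.Ioo (0:ℝ) b, HasDerivAt ch
      ((-(lam / t ^ 2)) •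
        (mink (c t) (ch t) • deriv c t - mink (deriv c t) (ch t) • c t)) t)
    (haccum : projAccum b (fun t => (T t) (c t)) (ch p)) :
    (∀ x : E n, x ≠ 0 → projAccum b ch x →
      x ∈ Submodule.span ℝ ({c 0, deriv c 0, deriv (deriv c) 0} : Set (E n)) ∧
        mink x x = 0) ∧
    projAccum b ch (c 0) ∧
    (∃ cb : E n, cb ∈ Submodule.span ℝ ({c 0, deriv c 0, deriv (deriv c) 0} : Set (E n)) ∧
      mink cb cb = 0 ∧ mink cb (c 0) = -1 ∧ mink cb (deriv c 0) = 0) ∧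
    (∀ cb : E n, cb ∈ Submodule.span ℝ ({c 0, deriv c 0, deriv (deriv c) 0} : Set (E n)) →
      mink cb cb = 0 → mink cb (c 0) = -1 → mink cb (deriv c 0) = 0 →
      projAccum b ch cb) ∧
    ¬ ∃ x : E n, x ≠ 0 ∧ ∃ r : ℝ → ℝ, (∀ t ∈ Set.Ioo (0:ℝ) b, r t ≠ 0) ∧
      Tendsto (fun t : ℝ => r t • ch t) (𝓝[>] 0) (𝓝 x) := by
  obtain ⟨hspan, hc₀, hex, hosc, hdiv⟩ := stmt19_general (isScalarProduct_minkForm n) hε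
    (contDiffOn_infty.1 hc 3) hcnull hcreg hlam hp hTp hT hch (hchne p hp) haccum
  exact ⟨fun x _ ↦ hspan x, hc₀, hex, hosc, fun ⟨x, hx, r, _, hr⟩ ↦ hdiv ⟨x, hx, r, hr⟩⟩
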